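/- arXiv:1408.0235 — 4 statements merged into one kernel-verified Lean document; each statement's English description precedes it below -/
import Mathlib

section
/- Let a be an integer that is not a perfect square. Then there exists a constant C such that for every real s > 1, |∑_p χ_p(a)·p^{-s}| ≤ C, where the sum runs over all odd primes p (this sum converges absolutely for every real s > 1). -/
/-!
Quadratic reciprocity makes `n ↦ (a / n)`, for odd `n`, a Dirichlet character `χ` modulo `4 * |a|`.
Writing `a = d * s ^ 2` with `d ≠ 1` squarefree, a suitable choice of residues modulo an odd prime
factor of `d` and modulo its cofactor (or a direct check when `d ∈ {-1, 2, -2}`) shows that `χ` is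
nontrivial. Hence `L(s, χ)` is continuous and nonvanishing on `1 ≤ re s`, so `log |L(s, χ)|` is
bounded for real `s ∈ [1, 2]`. By the Euler product it differs from `∑_p χ(p) p^{-s}` by the terms
`χ(p)^k p^{-ks} / k` with `k ≥ 2`, whose sum is `O(∑_p p^{-2})`; for `s ≥ 2` the sum over the
primes is itself bounded by `∑_p p^{-2}`.
-/

section NegativeValues

lemma exists_squarefree_mul_sq (a : ℤ) : ∃ d s : ℤ, Squarefree d ∧ a = d * s ^ 2 := by
  obtain ⟨m, s, hms, hm⟩ := Nat.sq_mul_squarefree a.natAbs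
  have habs : (a.natAbs : ℤ) = m * s ^ 2 := by rw [← hms]; push_cast; ring
  rcases Int.natAbs_eq a with h | h
  · exact ⟨m, s, Int.squarefree_natAbs.mp (by simpa), h.trans habs⟩
  · exact ⟨-m, s, Int.squarefree_natAbs.mp (by simpa), by rw [h, habs]; ring⟩

lemma exists_modEq_coprime {n m k : ℕ} (hk : k ≠ 0) (hmk : m ∣ k) (hnm : n.Coprime m) :
    ∃ n', n' ≡ n [MOD m] ∧ n'.Coprime k := by
  have : NeZero k := ⟨hk⟩
  obtain ⟨u, hu⟩ := ZMod.unitsMap_surjective hmk (ZMod.unitOfCoprime n hnm)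
  refine ⟨(u : ZMod k).val, (ZMod.natCast_eq_natCast_iff _ _ _).mp ?_, ZMod.val_coe_unit_coprime u⟩
  rw [← ZMod.coe_unitOfCoprime n hnm, ← hu, ZMod.unitsMap_val, ZMod.natCast_val]

lemma coprime_four_mul_natAbs_of_jacobiSym_ne_zero {a : ℤ} {n : ℕ} (hn : Odd n)
    (h : jacobiSym a n ≠ 0) : n.Coprime (4 * a.natAbs) := by
  have han : a.gcd n = 1 := by
    by_contra hgcd
    exact h (jacobiSym.eq_zero_iff.mpr ⟨hn.pos.ne', hgcd⟩)
  exact .mul_right (.pow_right 2 (Nat.coprime_two_right.mpr hn)) (Nat.Coprime.symm han)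

lemma exists_odd_jacobiSym_prime_mul_eq_neg_one {p : ℕ} [hp : Fact p.Prime] (hp2 : p ≠ 2) {e : ℤ}
    (hpe : ¬ (p : ℤ) ∣ e) : ∃ n : ℕ, Odd n ∧ jacobiSym (p * e) n = -1 := by
  have hcop : p.Coprime (4 * e.natAbs) := by
    refine .mul_right (.pow_right 2 ((Nat.coprime_primes hp.out Nat.prime_two).mpr hp2)) ?_
    rwa [hp.out.coprime_iff_not_dvd, ← Int.natCast_dvd]
  obtain ⟨r, hr⟩ := quadraticChar_exists_neg_one (F := ZMod p) (by rwa [ZMod.ringChar_zmod_n])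
  obtain ⟨n, hnr, hn1⟩ := Nat.chineseRemainder hcop r.val 1
  have hn4 : n % 4 = 1 := hn1.of_dvd (dvd_mul_right 4 _)
  have hodd : Odd n := Nat.odd_iff.mpr (by lia)
  have hn_cast : ((n : ℤ) : ZMod p) = r := by
    simpa using (ZMod.natCast_eq_natCast_iff n r.val p).mpr hnr
  have hJp : jacobiSym p n = -1 := by
    rw [jacobiSym.quadratic_reciprocity_one_mod_four' (hp.out.odd_of_ne_two hp2) hn4,
      ← jacobiSym.legendreSym.to_jacobiSym, legendreSym, hn_cast, hr]
  have hJe : jacobiSym e n = 1 := by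
    rw [jacobiSym.mod_right e hodd, hn1, ← jacobiSym.mod_right e odd_one, jacobiSym.one_right]
  exact ⟨n, hodd, by rw [jacobiSym.mul_left, hJp, hJe, mul_one]⟩

lemma exists_odd_jacobiSym_eq_neg_one_of_squarefree {d : ℤ} (hd : Squarefree d) (hd1 : d ≠ 1) :
    ∃ n : ℕ, Odd n ∧ jacobiSym d n = -1 := by
  by_cases! h : ∃ p : ℕ, p.Prime ∧ p ∣ d.natAbs ∧ p ≠ 2
  · obtain ⟨p, hp, hpd, hp2⟩ := h
    have : Fact p.Prime := ⟨hp⟩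
    obtain ⟨e, rfl⟩ := Int.natCast_dvd.mpr hpd
    refine exists_odd_jacobiSym_prime_mul_eq_neg_one hp2 fun hpe ↦ ?_
    exact (Nat.prime_iff_prime_int.mp hp).not_isUnit (hd p (mul_dvd_mul_left _ hpe))
  · have hd_dvd : d.natAbs ∣ 2 := by
      rw [← Nat.prod_primeFactors_of_squarefree (Int.squarefree_natAbs.mpr hd),
        Nat.prod_primeFactors_dvd_iff two_ne_zero, Nat.prime_two.primeFactors]
      exact fun p hp ↦ Finset.mem_singleton.mpr
        (h p (Nat.prime_of_mem_primeFactors hp) (Nat.dvd_of_mem_primeFactors hp))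
    have hd_cases : d = -1 ∨ d = 2 ∨ d = -2 := by
      rcases (Nat.dvd_prime Nat.prime_two).mp hd_dvd with h | h <;> lia
    rcases hd_cases with rfl | rfl | rfl
    · exact ⟨3, by decide, by norm_num⟩
    · exact ⟨3, by decide, by norm_num⟩
    · exact ⟨5, by decide, by norm_num⟩

lemma exists_odd_jacobiSym_eq_neg_one {a : ℤ} (ha : ¬ IsSquare a) :
    ∃ n : ℕ, Odd n ∧ jacobiSym a n = -1 := by
  obtain ⟨d, s, hd, rfl⟩ := exists_squarefree_mul_sq a
  have hd1 : d ≠ 1 := by rintro rfl; exact ha ⟨s, by ring⟩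
  have hs : s ≠ 0 := by rintro rfl; exact ha ⟨0, by ring⟩
  obtain ⟨n, hn, hJ⟩ := exists_odd_jacobiSym_eq_neg_one_of_squarefree hd hd1
  have hnd : n.Coprime (4 * d.natAbs) :=
    coprime_four_mul_natAbs_of_jacobiSym_ne_zero hn (by rw [hJ]; decide)
  -- `n` may share a factor with `s`, so it is replaced by a congruent `q` that does not.
  obtain ⟨q, hqn, hq⟩ := exists_modEq_coprime (k := 4 * d.natAbs * s.natAbs)
    (by simp [hd.ne_zero, hs]) (dvd_mul_right _ _) hnd
  have hq_odd : Odd q :=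
    Nat.coprime_two_right.mp (hq.coprime_dvd_right ⟨2 * d.natAbs * s.natAbs, by ring⟩)
  have hsq : s.gcd q = 1 := (hq.coprime_dvd_right (dvd_mul_left _ _)).symm
  refine ⟨q, hq_odd, ?_⟩
  rw [jacobiSym.mul_left, jacobiSym.sq_one' hsq, mul_one, jacobiSym.mod_right d hq_odd, hqn,
    ← jacobiSym.mod_right d hn, hJ]

end NegativeValues

section JacobiCharacter

/-- The Jacobi symbol `(a / n)` for odd `n`, set to zero at even `n` so that it is periodic in `n`
with period `4 * |a|`. -/
def oddJacobiSym (a : ℤ) (n : ℕ) : ℤ := if Odd n then jacobiSym a n else 0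

lemma oddJacobiSym_mod (a : ℤ) (n : ℕ) :
    oddJacobiSym a (n % (4 * a.natAbs)) = oddJacobiSym a n := by
  have hodd : Odd (n % (4 * a.natAbs)) ↔ Odd n :=
    Odd.mod_even_iff (Even.mul_right (by decide) _)
  simp only [oddJacobiSym, hodd]
  split_ifs with hn
  · rw [jacobiSym.mod_right a hn]
  · rfl

lemma oddJacobiSym_mul (a : ℤ) (m n : ℕ) :
    oddJacobiSym a (m * n) = oddJacobiSym a m * oddJacobiSym a n := by
  by_cases h : Odd m ∧ Odd n
  · simp [oddJacobiSym, h, jacobiSym.mul_right' a h.1.pos.ne' h.2.pos.ne']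
  · rcases not_and_or.mp h with h | h <;> simp [oddJacobiSym, Nat.odd_mul, h]

lemma oddJacobiSym_eq_zero {a : ℤ} {n : ℕ} (h : ¬ n.Coprime (4 * a.natAbs)) :
    oddJacobiSym a n = 0 := by
  rw [oddJacobiSym, ite_eq_right_iff]
  intro hn
  contrapose! h
  exact coprime_four_mul_natAbs_of_jacobiSym_ne_zero hn h

/-- The Dirichlet character `n ↦ (a / n)` modulo `4 * |a|`, zero at even `n`. -/
def jacobiChar (a : ℤ) [NeZero a] : DirichletCharacter ℤ (4 * a.natAbs) where
  toFun x := oddJacobiSym a x.val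
  map_one' := by
    rw [← Nat.cast_one, ZMod.val_natCast, oddJacobiSym_mod]
    simp [oddJacobiSym]
  map_mul' x y := by rw [ZMod.val_mul, oddJacobiSym_mod, oddJacobiSym_mul]
  map_nonunit' x hx := by
    rw [← ZMod.natCast_zmod_val x, ZMod.isUnit_iff_coprime] at hx
    exact oddJacobiSym_eq_zero hx

variable (a : ℤ) [NeZero a]

lemma jacobiChar_natCast (n : ℕ) : jacobiChar a n = oddJacobiSym a n := by
  change oddJacobiSym a (n : ZMod (4 * a.natAbs)).val = _
  rw [ZMod.val_natCast, oddJacobiSym_mod]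

lemma jacobiChar_of_odd {n : ℕ} (hn : Odd n) : jacobiChar a n = jacobiSym a n := by
  rw [jacobiChar_natCast, oddJacobiSym, if_pos hn]

lemma jacobiChar_of_even {n : ℕ} (hn : Even n) : jacobiChar a n = 0 := by
  rw [jacobiChar_natCast, oddJacobiSym, if_neg (Nat.not_odd_iff_even.mpr hn)]

lemma jacobiChar_eq_legendreSym {p : ℕ} [hp : Fact p.Prime] (hp2 : p ≠ 2) :
    jacobiChar a p = legendreSym p a := by
  rw [jacobiChar_of_odd a (hp.out.odd_of_ne_two hp2), jacobiSym.legendreSym.to_jacobiSym]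

variable {a}

lemma jacobiChar_ne_one (ha : ¬ IsSquare a) : jacobiChar a ≠ 1 := by
  obtain ⟨n, hn, hJ⟩ := exists_odd_jacobiSym_eq_neg_one ha
  have hunit : IsUnit (n : ZMod (4 * a.natAbs)) := (ZMod.isUnit_iff_coprime _ _).mpr
    (coprime_four_mul_natAbs_of_jacobiSym_ne_zero hn (by rw [hJ]; decide))
  intro h
  have hval := jacobiChar_of_odd a hn
  rw [h, MulChar.one_apply hunit, hJ] at hval
  lia

end JacobiCharacter

section PrimeLSeries

open Complex

lemma norm_neg_log_one_sub_sub_self_le {z : ℂ} (hz : ‖z‖ ≤ 1 / 2) :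
    ‖-log (1 - z) - z‖ ≤ ‖z‖ ^ 2 := by
  have hinv : (1 - ‖z‖)⁻¹ ≤ 2 := by
    rw [inv_le_comm₀ (by linarith) two_pos]
    linarith
  calc ‖-log (1 - z) - z‖ = ‖log (1 + -z) - -z‖ := by
        rw [← norm_neg]; congr 1; ring_nf
    _ ≤ ‖-z‖ ^ 2 * (1 - ‖-z‖)⁻¹ / 2 := norm_log_one_add_sub_self_le (by rw [norm_neg]; linarith)
    _ ≤ ‖z‖ ^ 2 * 2 / 2 := by rw [norm_neg]; gcongr
    _ = ‖z‖ ^ 2 := by ring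

/-- The prime zeta function `∑_p p^{-σ}` at a real argument. The series converges only for `1 < σ`;
elsewhere the value is `0`. -/
noncomputable def primeZeta (σ : ℝ) : ℝ := ∑' p : Nat.Primes, (p : ℝ) ^ (-σ)

lemma hasSum_primeZeta {σ : ℝ} (hσ : 1 < σ) :
    HasSum (fun p : Nat.Primes ↦ (p : ℝ) ^ (-σ)) (primeZeta σ) :=
  (Nat.Primes.summable_rpow.mpr (neg_lt_neg hσ)).hasSum

/-- The Dirichlet series `∑_p χ(p) p^{-s}` over the primes, used for `1 < re s`, where it converges
absolutely. -/
noncomputable def primeLSeries {N : ℕ} (χ : DirichletCharacter ℂ N) (s : ℂ) : ℂ :=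
  ∑' p : Nat.Primes, χ p * (p : ℂ) ^ (-s)

variable {N : ℕ} (χ : DirichletCharacter ℂ N) {s : ℂ}

lemma norm_dirichletCharacter_mul_cpow_le {n : ℕ} (hn : 0 < n) {σ : ℝ} (hσ : σ ≤ s.re) :
    ‖χ n * (n : ℂ) ^ (-s)‖ ≤ (n : ℝ) ^ (-σ) := by
  calc ‖χ n * (n : ℂ) ^ (-s)‖ = ‖χ n‖ * (n : ℝ) ^ (-s.re) := by
        rw [norm_mul, norm_natCast_cpow_of_pos hn, neg_re]
    _ ≤ 1 * (n : ℝ) ^ (-σ) := by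
        gcongr
        · exact χ.norm_le_one _
        · exact_mod_cast hn
    _ = (n : ℝ) ^ (-σ) := one_mul _

lemma summable_primeLSeries (hs : 1 < s.re) :
    Summable fun p : Nat.Primes ↦ χ p * (p : ℂ) ^ (-s) :=
  .of_norm_bounded (hasSum_primeZeta hs).summable
    fun p ↦ norm_dirichletCharacter_mul_cpow_le χ p.2.pos le_rfl

lemma norm_primeLSeries_le_primeZeta {σ : ℝ} (hσ : 1 < σ) (hs : σ ≤ s.re) :
    ‖primeLSeries χ s‖ ≤ primeZeta σ :=
  tsum_of_norm_bounded (hasSum_primeZeta hσ)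
    fun p ↦ norm_dirichletCharacter_mul_cpow_le χ p.2.pos hs

lemma norm_neg_log_eulerFactor_sub_le {n : ℕ} (hn : 2 ≤ n) (hs : 1 ≤ s.re) :
    ‖-log (1 - χ n * (n : ℂ) ^ (-s)) - χ n * (n : ℂ) ^ (-s)‖ ≤ (n : ℝ) ^ (-2 : ℝ) := by
  have hz : ‖χ n * (n : ℂ) ^ (-s)‖ ≤ (n : ℝ)⁻¹ := by
    simpa [Real.rpow_neg_one] using norm_dirichletCharacter_mul_cpow_le χ (by lia) hs
  have hn_inv : (n : ℝ)⁻¹ ≤ 1 / 2 := by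
    rw [one_div]
    gcongr
    exact_mod_cast hn
  calc ‖-log (1 - χ n * (n : ℂ) ^ (-s)) - χ n * (n : ℂ) ^ (-s)‖
      ≤ ‖χ n * (n : ℂ) ^ (-s)‖ ^ 2 := norm_neg_log_one_sub_sub_self_le (hz.trans hn_inv)
    _ ≤ (n : ℝ)⁻¹ ^ 2 := by gcongr
    _ = (n : ℝ) ^ (-2 : ℝ) := by
        rw [Real.rpow_neg n.cast_nonneg, Real.rpow_two, inv_pow]

lemma norm_tsum_neg_log_eulerFactor_sub_primeLSeries_le (hs : 1 < s.re) :
    ‖∑' p : Nat.Primes, -log (1 - χ p * (p : ℂ) ^ (-s)) - primeLSeries χ s‖ ≤ primeZeta 2 := by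
  rw [primeLSeries, ← (χ.summable_neg_log_one_sub_mul_prime_cpow hs).tsum_sub
    (summable_primeLSeries χ hs)]
  exact tsum_of_norm_bounded (hasSum_primeZeta one_lt_two)
    fun p ↦ norm_neg_log_eulerFactor_sub_le χ p.2.two_le hs.le

lemma summable_primeLSeries_ne (hs : 1 < s.re) (q : ℕ) :
    Summable fun p : {p : ℕ // p.Prime ∧ p ≠ q} ↦ χ p.1 * (p.1 : ℂ) ^ (-s) :=
  (summable_primeLSeries χ hs).comp_injective
    (i := Subtype.map id fun _ hp ↦ hp.1) (Subtype.map_injective _ Function.injective_id)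

variable {χ} in
lemma primeLSeries_eq_tsum_ne {q : ℕ} (hχ : χ q = 0) (s : ℂ) :
    primeLSeries χ s = ∑' p : {p : ℕ // p.Prime ∧ p ≠ q}, χ p.1 * (p.1 : ℂ) ^ (-s) :=
  tsum_eq_tsum_sdiff_singleton (f := fun n : ℕ ↦ χ n * (n : ℂ) ^ (-s)) {p | p.Prime}
    (by rw [hχ, zero_mul])

variable [NeZero N]

lemma log_norm_LFunction_eq_re_tsum (hs : 1 < s.re) :
    Real.log ‖χ.LFunction s‖ = (∑' p : Nat.Primes, -log (1 - χ p * (p : ℂ) ^ (-s))).re := by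
  rw [χ.LFunction_eq_LSeries hs, ← χ.LSeries_eulerProduct_exp_log hs, norm_exp, Real.log_exp]

lemma abs_log_norm_LFunction_sub_re_primeLSeries_le (hs : 1 < s.re) :
    |Real.log ‖χ.LFunction s‖ - (primeLSeries χ s).re| ≤ primeZeta 2 := by
  rw [log_norm_LFunction_eq_re_tsum χ hs, ← sub_re]
  exact (abs_re_le_norm _).trans (norm_tsum_neg_log_eulerFactor_sub_primeLSeries_le χ hs)

variable {χ}

lemma exists_abs_log_norm_LFunction_le (hχ : χ ≠ 1) {K : Set ℂ} (hK : IsCompact K)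
    (hK_re : ∀ s ∈ K, 1 ≤ s.re) : ∃ B, ∀ s ∈ K, |Real.log ‖χ.LFunction s‖| ≤ B := by
  refine hK.exists_bound_of_continuousOn (ContinuousOn.log ?_ fun s hs ↦ norm_ne_zero_iff.mpr ?_)
  · exact (DirichletCharacter.differentiable_LFunction hχ).continuous.norm.continuousOn
  · exact χ.LFunction_ne_zero_of_one_le_re (.inl hχ) (hK_re s hs)

theorem exists_abs_re_primeLSeries_le (hχ : χ ≠ 1) (T : ℝ) :
    ∃ C, ∀ s : ℂ, 1 < s.re → |s.im| ≤ T → |(primeLSeries χ s).re| ≤ C := by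
  have hK : IsCompact (Set.Icc 1 2 ×ℂ Set.Icc (-T) T) := isCompact_Icc.reProdIm isCompact_Icc
  obtain ⟨B, hB⟩ := exists_abs_log_norm_LFunction_le hχ hK fun s hs ↦ hs.1.1
  refine ⟨max (B + primeZeta 2) (primeZeta 2), fun s hs hsT ↦ ?_⟩
  rcases le_total s.re 2 with hs2 | hs2
  · have hlog : |Real.log ‖χ.LFunction s‖| ≤ B := hB s ⟨⟨hs.le, hs2⟩, abs_le.mp hsT⟩
    have hdiff := abs_log_norm_LFunction_sub_re_primeLSeries_le χ hs
    set L := Real.log ‖χ.LFunction s‖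
    refine le_max_of_le_left ?_
    calc |(primeLSeries χ s).re| = |L - (L - (primeLSeries χ s).re)| := by rw [sub_sub_cancel]
      _ ≤ |L| + |L - (primeLSeries χ s).re| := abs_sub _ _
      _ ≤ B + primeZeta 2 := add_le_add hlog hdiff
  · exact le_max_of_le_right
      ((abs_re_le_norm _).trans (norm_primeLSeries_le_primeZeta χ one_lt_two hs2))

end PrimeLSeries

lemma jacobiChar_mul_cpow_eq_ofReal (a : ℤ) [NeZero a] {p : ℕ} [Fact p.Prime] (hp2 : p ≠ 2)
    (s : ℝ) : (jacobiChar a).ringHomComp (Int.castRingHom ℂ) p * (p : ℂ) ^ (-(s : ℂ)) =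
      (((legendreSym p a : ℝ) * (p : ℝ) ^ (-s) : ℝ) : ℂ) := by
  rw [MulChar.ringHomComp_apply, jacobiChar_eq_legendreSym a hp2, Complex.ofReal_mul,
    Complex.ofReal_cpow p.cast_nonneg]
  simp

/-- Lemma 5.12: if `a` is an integer that is not a perfect square, then the sums
`∑_p χ_p(a) p^{-s}` over the odd primes `p` (which converge absolutely for every real `s > 1`)
remain bounded for `s > 1`. -/
theorem bounded_sum_legendreSym_mul_rpow (a : ℤ) (ha : ¬ IsSquare a) :
    ∃ C : ℝ, ∀ s : ℝ, 1 < s →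
      Summable (fun p : {p : ℕ // p.Prime ∧ p ≠ 2} =>
        |((@legendreSym p.1 ⟨p.2.1⟩ a : ℤ) : ℝ) * (p.1 : ℝ) ^ (-s)|) ∧
      |∑' p : {p : ℕ // p.Prime ∧ p ≠ 2},
          ((@legendreSym p.1 ⟨p.2.1⟩ a : ℤ) : ℝ) * (p.1 : ℝ) ^ (-s)| ≤ C := by
  have : NeZero a := ⟨by rintro rfl; exact ha .zero⟩
  set χ := (jacobiChar a).ringHomComp (Int.castRingHom ℂ) with hχ_def
  have hχ : χ ≠ 1 :=
    (MulChar.ringHomComp_ne_one_iff (Int.castRingHom ℂ).injective_int).mpr (jacobiChar_ne_one ha)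
  have hχ_two : χ (2 : ℕ) = 0 := by
    rw [hχ_def, MulChar.ringHomComp_apply, jacobiChar_of_even a even_two, map_zero]
  obtain ⟨C, hC⟩ := exists_abs_re_primeLSeries_le hχ 0
  refine ⟨C, fun s hs ↦ ?_⟩
  have hterm (p : {p : ℕ // p.Prime ∧ p ≠ 2}) :=
    letI := Fact.mk p.2.1
    jacobiChar_mul_cpow_eq_ofReal a p.2.2 s
  constructor
  · exact (Complex.summable_ofReal.mp ((summable_primeLSeries_ne χ hs 2).congr hterm)).abs
  · have hbound := hC s hs (by simp)
    rwa [primeLSeries_eq_tsum_ne hχ_two, tsum_congr hterm, ← Complex.ofReal_tsum,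
      Complex.ofReal_re] at hbound
end

section
/- Let p be a prime with p ≡ 1 (mod 4). Then ∑_{0<n<p/4} χ_p(n) = (√p/π)·L(1, χ_{4p}), where the sum runs over all integers n with 0 < n < p/4 (an identity in ℂ after casting the integer left-hand side; both sides are in fact real). -/
/-!
For an even primitive character `χ` of odd modulus `N`, the Fourier transform of `χ` is `τ(χ) χ⁻¹`,
so that `τ(χ) L(s, χ₄ χ⁻¹) = ∑ₐ χ(a) sinZeta(a/N + 1/4, s)`: shifting by a quarter period makes the
exponentials at `±n` recombine into the values of `χ₄`. At `s = 1` the function `sinZeta` is the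
sawtooth `π (1/2 - {x})`; since `χ` is even, its linear part contributes nothing, and its jump
leaves `π ∑_{n < N/4} χ(n)`.

That the Gauss sum of the Legendre symbol is `+√p` when `p ≡ 1 (mod 4)` follows from
its equality with `∏ (ζ^h - ζ^(-h))` over odd `0 < h < p`. The squares agree, and the sign is
decided modulo a high power of the prime `1 - ζ` above `p`. For `ζ = exp (2 π i / p)` the factors
of the product pair up into products of positive sines.
-/

namespace QuadraticExcess

section PolylogarithmAtOne

open Complex Filter Topology Set MeasureTheory HurwitzZeta
open scoped Real

variable {z : ℂ}

lemma eq_at_one_of_eq_on_one_lt_re {f g : ℂ → ℂ} (hf : ContinuousAt f 1) (hg : ContinuousAt g 1)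
    (hfg : ∀ s : ℂ, 1 < s.re → f s = g s) : f 1 = g 1 := by
  have hmem : (1 : ℂ) ∈ closure {s : ℂ | 1 < s.re} := by
    rw [closure_setOfPred_lt_re]
    simp
  have := mem_closure_iff_nhdsWithin_neBot.1 hmem
  have hev : f =ᶠ[𝓝[{s : ℂ | 1 < s.re}] 1] g := eventually_nhdsWithin_of_forall hfg
  exact tendsto_nhds_unique_of_eventuallyEq (hf.mono_left nhdsWithin_le_nhds)
    (hg.mono_left nhdsWithin_le_nhds) hev

lemma one_sub_mem_slitPlane (hz : ‖z‖ ≤ 1) (hz1 : z ≠ 1) : 1 - z ∈ slitPlane := by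
  rw [mem_slitPlane_iff_not_le_zero, Complex.le_def]
  rintro ⟨hre, him⟩
  have hre' : 1 ≤ z.re := by simpa using hre
  have him' : z.im = 0 := by simpa using him
  exact hz1 (Complex.ext (le_antisymm ((re_le_norm z).trans hz) hre') him')

lemma norm_mul_exp_neg_lt_one (hz : ‖z‖ ≤ 1) {t : ℝ} (ht : 0 < t) : ‖z * rexp (-t)‖ < 1 := by
  rw [norm_mul, norm_real, Real.norm_of_nonneg (Real.exp_pos _).le]
  exact mul_lt_one_of_nonneg_of_lt_one_right hz (Real.exp_pos _).le (by simpa using ht)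

lemma one_sub_mul_exp_neg_mem_slitPlane (hz : ‖z‖ ≤ 1) (hz1 : z ≠ 1) {t : ℝ} (ht : 0 ≤ t) :
    1 - z * rexp (-t) ∈ slitPlane := by
  rcases ht.eq_or_lt with rfl | ht
  · simpa using one_sub_mem_slitPlane hz hz1
  · have hlt := norm_mul_exp_neg_lt_one hz ht
    refine one_sub_mem_slitPlane hlt.le fun h ↦ ?_
    rw [h, norm_one] at hlt
    exact lt_irrefl _ hlt

/-- The generating function `∑_{n ≥ 1} zⁿ e^{-nt}` in closed form; its Mellin transform at `s` is
`Γ(s)` times the polylogarithm `∑_{n ≥ 1} zⁿ / nˢ`. -/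
noncomputable def polylogKernel (z : ℂ) (t : ℝ) : ℂ :=
  z * rexp (-t) / (1 - z * rexp (-t))

lemma hasSum_polylogKernel (hz : ‖z‖ ≤ 1) {t : ℝ} (ht : 0 < t) :
    HasSum (fun n : ℕ ↦ z ^ (n + 1) * (rexp (-((n : ℝ) + 1) * t) : ℂ)) (polylogKernel z t) := by
  refine ((hasSum_geometric_of_norm_lt_one
    (norm_mul_exp_neg_lt_one hz ht)).mul_left (z * rexp (-t))).congr_fun fun n ↦ ?_
  rw [← pow_succ', mul_pow, ← ofReal_pow, ← Real.exp_nat_mul]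
  push_cast
  ring_nf

lemma continuousOn_polylogKernel (hz : ‖z‖ ≤ 1) (hz1 : z ≠ 1) :
    ContinuousOn (polylogKernel z) (Ici 0) := by
  refine ContinuousOn.div (by fun_prop) (by fun_prop) fun t ht ↦ ?_
  exact slitPlane_ne_zero (one_sub_mul_exp_neg_mem_slitPlane hz hz1 ht)

lemma locallyIntegrableOn_polylogKernel (hz : ‖z‖ ≤ 1) (hz1 : z ≠ 1) :
    LocallyIntegrableOn (polylogKernel z) (Ioi 0) :=
  ((continuousOn_polylogKernel hz hz1).mono Ioi_subset_Ici_self).locallyIntegrableOn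
    measurableSet_Ioi

lemma tendsto_mul_exp_neg_atTop (z : ℂ) :
    Tendsto (fun t : ℝ ↦ z * (rexp (-t) : ℂ)) atTop (𝓝 0) := by
  simpa using ((continuous_ofReal.tendsto 0).comp Real.tendsto_exp_neg_atTop_nhds_zero).const_mul z

lemma polylogKernel_isBigO_atTop (z : ℂ) :
    polylogKernel z =O[atTop] fun t ↦ rexp (-1 * t) := by
  have hquot : Tendsto (fun t : ℝ ↦ z / (1 - z * rexp (-t))) atTop (𝓝 (z / (1 - 0))) :=
    tendsto_const_nhds.div ((tendsto_mul_exp_neg_atTop z).const_sub 1) (by simp)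
  have hexp : (fun t : ℝ ↦ (rexp (-1 * t) : ℂ)) =O[atTop] fun t ↦ rexp (-1 * t) :=
    isBigO_ofReal_left.2 (Asymptotics.isBigO_refl _ _)
  refine ((hquot.isBigO_one ℝ).mul hexp).congr (fun t ↦ ?_) fun t ↦ one_mul _
  rw [polylogKernel, neg_one_mul, div_mul_eq_mul_div]

lemma polylogKernel_isBigO_zero (hz : ‖z‖ ≤ 1) (hz1 : z ≠ 1) :
    polylogKernel z =O[𝓝[>] 0] fun t ↦ t ^ (-0 : ℝ) := by
  simp only [neg_zero, Real.rpow_zero]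
  exact (((continuousOn_polylogKernel hz hz1) 0 self_mem_Ici).mono
    Ioi_subset_Ici_self).tendsto.isBigO_one ℝ

lemma differentiableAt_mellin_polylogKernel (hz : ‖z‖ ≤ 1) (hz1 : z ≠ 1) {s : ℂ} (hs : 0 < s.re) :
    DifferentiableAt ℂ (mellin (polylogKernel z)) s :=
  mellin_differentiableAt_of_isBigO_rpow_exp one_pos (locallyIntegrableOn_polylogKernel hz hz1)
    (polylogKernel_isBigO_atTop z) (polylogKernel_isBigO_zero hz hz1) hs

lemma mellin_polylogKernel_one (hz : ‖z‖ ≤ 1) (hz1 : z ≠ 1) :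
    mellin (polylogKernel z) 1 = -log (1 - z) := by
  have hint : IntegrableOn (polylogKernel z) (Ioi 0) := by
    simpa [MellinConvergent] using mellinConvergent_of_isBigO_rpow_exp one_pos
      (locallyIntegrableOn_polylogKernel hz hz1) (polylogKernel_isBigO_atTop z)
      (polylogKernel_isBigO_zero hz hz1) (s := 1) (by simp)
  have hderiv {t : ℝ} (ht : 0 ≤ t) :
      HasDerivAt (fun t : ℝ ↦ log (1 - z * rexp (-t))) (polylogKernel z t) t := by
    have hexp : HasDerivAt (fun t : ℝ ↦ 1 - z * (rexp (-t) : ℂ)) (z * rexp (-t)) t := by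
      simpa using (((hasDerivAt_neg t).exp.ofReal_comp).const_mul z).const_sub 1
    exact hexp.clog_real (one_sub_mul_exp_neg_mem_slitPlane hz hz1 ht)
  have hlim : Tendsto (fun t : ℝ ↦ log (1 - z * rexp (-t))) atTop (𝓝 0) := by
    simpa using ((tendsto_mul_exp_neg_atTop z).const_sub 1).clog (by simp)
  have hFTC := integral_Ioi_of_hasDerivAt_of_tendsto
    (hderiv le_rfl).continuousAt.continuousWithinAt (fun t ht ↦ hderiv (le_of_lt ht)) hint hlim
  simpa [mellin] using hFTC

lemma hasSum_mellin_polylogKernel (hz : ‖z‖ ≤ 1) {s : ℂ} (hs : 1 < s.re) :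
    HasSum (fun n : ℕ ↦ Gamma s * z ^ (n + 1) / ((n : ℂ) + 1) ^ s)
      (mellin (polylogKernel z) s) := by
  have hsum : Summable fun n : ℕ ↦ ‖z ^ (n + 1)‖ / ((n : ℝ) + 1) ^ s.re := by
    refine .of_nonneg_of_le (fun n ↦ by positivity) (fun n ↦ ?_)
      ((summable_nat_add_iff 1).2 (Real.summable_one_div_nat_rpow.2 hs))
    push_cast
    gcongr
    rw [norm_pow]
    exact pow_le_one₀ (norm_nonneg z) hz
  simpa using hasSum_mellin (fun n ↦ .inr (by positivity)) (zero_lt_one.trans hs)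
    (fun t ht ↦ hasSum_polylogKernel hz ht) hsum

lemma Gamma_mul_expZeta_eq_mellin (x : ℝ) {s : ℂ} (hs : 1 < s.re) :
    Gamma s * expZeta x s = mellin (polylogKernel (cexp (2 * π * I * x))) s := by
  have hnorm : ‖cexp (2 * π * I * x)‖ ≤ 1 := by simp [norm_exp]
  have hs0 : s ≠ 0 := by
    rintro rfl
    norm_num at hs
  have hexp := ((hasSum_nat_add_iff' 1).2 (hasSum_expZeta_of_one_lt_re x hs)).mul_left (Gamma s)
  simp only [Finset.range_one, Finset.sum_singleton, Nat.cast_zero, zero_cpow hs0, div_zero,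
    sub_zero] at hexp
  refine hexp.unique ((hasSum_mellin_polylogKernel hnorm hs).congr_fun fun n ↦ ?_)
  rw [← Complex.exp_nat_mul, mul_div_assoc]
  push_cast
  ring_nf

lemma exp_two_pi_I_mul_ne_one {x : ℝ} (hx : (x : UnitAddCircle) ≠ 0) :
    cexp (2 * π * I * x) ≠ 1 := by
  rw [Ne, Complex.exp_eq_one_iff]
  rintro ⟨n, hn⟩
  refine hx ((AddCircle.coe_eq_zero_iff 1).2 ⟨n, ?_⟩)
  have hxn : (x : ℂ) = n := mul_left_cancel₀ two_pi_I_ne_zero (hn.trans (mul_comm _ _))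
  simpa using (by exact_mod_cast hxn.symm : (n : ℝ) = x)

theorem expZeta_one {x : ℝ} (hx : (x : UnitAddCircle) ≠ 0) :
    expZeta x 1 = -log (1 - cexp (2 * π * I * x)) := by
  have hnorm : ‖cexp (2 * π * I * x)‖ ≤ 1 := by simp [norm_exp]
  have hne := exp_two_pi_I_mul_ne_one hx
  have hGamma : ContinuousAt Gamma 1 := differentiableAt_Gamma_one.continuousAt
  have hexpZeta := (differentiable_expZeta_of_ne_zero hx).continuous.continuousAt (x := 1)
  have hmellin := (differentiableAt_mellin_polylogKernel hnorm hne (s := 1) (by simp)).continuousAt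
  have h := eq_at_one_of_eq_on_one_lt_re (hGamma.mul hexpZeta) hmellin
    fun s hs ↦ Gamma_mul_expZeta_eq_mellin x hs
  rwa [Pi.mul_apply, Gamma_one, one_mul, mellin_polylogKernel_one hnorm hne] at h

lemma arg_one_sub_exp_two_pi_I_mul {x : ℝ} (hx0 : 0 < x) (hx1 : x < 1) :
    arg (1 - cexp (2 * π * I * x)) = π * (x - 1 / 2) := by
  have hsin : 0 < 2 * Real.sin (π * x) :=
    mul_pos two_pos (Real.sin_pos_of_pos_of_lt_pi (by positivity)
      (mul_lt_of_lt_one_right Real.pi_pos hx1))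
  have hmem : π * (x - 1 / 2) ∈ Ioc (-π) π := by
    constructor <;> nlinarith [Real.pi_pos]
  rw [← arg_mul_cos_add_sin_mul_I hsin hmem]
  congr 1
  have hangle : (2 * π * I * x : ℂ) = (2 * (π * x) : ℂ) * I := by ring
  have hshift : ((π * (x - 1 / 2) : ℝ) : ℂ) = π * x - π / 2 := by push_cast; ring
  rw [hangle, hshift, exp_mul_I, cos_two_mul, sin_two_mul, cos_sub_pi_div_two, sin_sub_pi_div_two]
  push_cast
  linear_combination -2 * cos_sq_add_sin_sq (π * x : ℂ)

theorem sinZeta_one {x : ℝ} (hx0 : 0 < x) (hx1 : x < 1) :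
    sinZeta x 1 = π * (1 / 2 - x) := by
  have hx : (x : UnitAddCircle) ≠ 0 := by
    rw [Ne, AddCircle.coe_eq_zero_iff_of_mem_Ico (p := (1 : ℝ)) ⟨hx0.le, hx1⟩]
    exact hx0.ne'
  have hneg : ((-x : ℝ) : UnitAddCircle) ≠ 0 := by simpa using hx
  have hslit : 1 - cexp (2 * π * I * x) ∈ slitPlane :=
    one_sub_mem_slitPlane (by simp [norm_exp]) (exp_two_pi_I_mul_ne_one hx)
  have hconj : 1 - cexp (2 * π * I * (-x : ℝ)) =
      (starRingEnd ℂ) (1 - cexp (2 * π * I * x)) := by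
    simp [← exp_conj, map_ofNat]
  rw [sinZeta_eq, ← AddCircle.coe_neg, expZeta_one hx, expZeta_one hneg, hconj,
    log_conj _ (slitPlane_arg_ne_pi hslit), neg_sub_neg, ← neg_sub, sub_conj, log_im,
    arg_one_sub_exp_two_pi_I_mul hx0 hx1]
  push_cast
  field_simp
  ring

end PolylogarithmAtOne

lemma sum_zmod_eq_sum_range {A : Type*} [AddCommMonoid A] {N : ℕ} [NeZero N] (g : ZMod N → A) :
    ∑ a : ZMod N, g a = ∑ n ∈ Finset.range N, g n :=
  Finset.sum_bij' (fun a _ ↦ a.val) (fun n _ ↦ (n : ZMod N))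
    (fun a _ ↦ Finset.mem_range.2 a.val_lt) (by simp) (by simp)
    (fun _ hn ↦ ZMod.val_cast_of_lt (Finset.mem_range.1 hn)) (by simp)

section EvenCharacters

open HurwitzZeta DirichletCharacter
open Complex (I)
open scoped Real

lemma I_pow_sub_neg_I_pow (n : ℕ) : I ^ n - (-I) ^ n = 2 * I * (ZMod.χ₄ n : ℤ) := by
  rcases n.even_or_odd' with ⟨k, rfl | rfl⟩
  · have hχ₄ : ZMod.χ₄ ((2 * k : ℕ) : ZMod 4) = 0 := by
      rw [ZMod.χ₄_nat_eq_if_mod_four, if_pos (by omega)]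
    rw [hχ₄, (even_two_mul k).neg_pow]
    simp
  · rw [(odd_two_mul_add_one k).neg_pow, ZMod.χ₄_eq_neg_one_pow (by omega),
      show (2 * k + 1) / 2 = k by omega, pow_succ, pow_mul, Complex.I_sq]
    push_cast
    ring

lemma even_inv {N : ℕ} {χ : DirichletCharacter ℂ N} (heven : χ.Even) : χ⁻¹.Even := by
  have h : χ⁻¹ (-1) * χ (-1) = 1 := by
    rw [← MulChar.mul_apply, inv_mul_cancel, MulChar.one_apply isUnit_one.neg]
  rwa [heven, mul_one] at h

variable {N : ℕ} [NeZero N] {χ : DirichletCharacter ℂ N}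

lemma exp_val_div_add_quarter_mul (a : ZMod N) (n : ℕ) :
    Complex.exp ((2 * π * (a.val / N + 1 / 4 : ℝ) * n : ℝ) * I) =
      I ^ n * ZMod.stdAddChar ((n : ZMod N) * a) := by
  rw [← nsmul_eq_mul, AddChar.map_nsmul_eq_pow, ← mul_pow, ZMod.stdAddChar_apply,
    ZMod.toCircle_apply]
  nth_rw 2 [← Complex.exp_pi_div_two_mul_I]
  rw [← Complex.exp_add, ← Complex.exp_nat_mul]
  push_cast
  ring_nf

lemma sum_mul_stdAddChar_mul (hprim : χ.IsPrimitive) (b : ZMod N) :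
    ∑ a, χ a * ZMod.stdAddChar (b * a) = gaussSum χ ZMod.stdAddChar * χ⁻¹ b := by
  rw [mul_comm, ← gaussSum_mulShift_of_isPrimitive ZMod.stdAddChar hprim b]
  rfl

lemma sum_mul_sin_of_even (heven : χ.Even) (hprim : χ.IsPrimitive) (n : ℕ) :
    ∑ a, χ a * (Real.sin (2 * π * (a.val / N + 1 / 4 : ℝ) * n) : ℂ) =
      gaussSum χ ZMod.stdAddChar * ((ZMod.χ₄ n : ℤ) * χ⁻¹ n) := by
  have hsin (a : ZMod N) : (Real.sin (2 * π * (a.val / N + 1 / 4 : ℝ) * n) : ℂ) =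
      (I ^ n * ZMod.stdAddChar ((n : ZMod N) * a) -
        (-I) ^ n * ZMod.stdAddChar (-(n : ZMod N) * a)) / (2 * I) := by
    rw [Complex.ofReal_sin, Complex.sin, neg_mul, Complex.exp_neg, exp_val_div_add_quarter_mul,
      mul_inv, ← inv_pow, Complex.inv_I, neg_mul, AddChar.map_neg_eq_inv,
      eq_div_iff (by simp)]
    linear_combination ((-I) ^ n * (ZMod.stdAddChar ((n : ZMod N) * a) : ℂ)⁻¹ -
      I ^ n * ZMod.stdAddChar ((n : ZMod N) * a)) * Complex.I_sq
  calc ∑ a, χ a * (Real.sin (2 * π * (a.val / N + 1 / 4 : ℝ) * n) : ℂ)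
    _ = (I ^ n * ∑ a, χ a * ZMod.stdAddChar ((n : ZMod N) * a) -
          (-I) ^ n * ∑ a, χ a * ZMod.stdAddChar (-(n : ZMod N) * a)) / (2 * I) := by
        simp only [hsin, Finset.mul_sum, ← Finset.sum_sub_distrib, Finset.sum_div]
        exact Finset.sum_congr rfl fun a _ ↦ by ring
    _ = gaussSum χ ZMod.stdAddChar * ((I ^ n - (-I) ^ n) * χ⁻¹ n) / (2 * I) := by
        rw [sum_mul_stdAddChar_mul hprim, sum_mul_stdAddChar_mul hprim,
          (even_inv heven).eval_neg]
        ring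
    _ = gaussSum χ ZMod.stdAddChar * ((ZMod.χ₄ n : ℤ) * χ⁻¹ n) := by
        rw [I_pow_sub_neg_I_pow]
        field_simp

theorem gaussSum_mul_LFunction_eq_sum_sinZeta (heven : χ.Even) (hprim : χ.IsPrimitive)
    {M : ℕ} [NeZero M] {ψ : DirichletCharacter ℂ M}
    (hψ : ∀ n : ℤ, ψ n = (ZMod.χ₄ n : ℤ) * χ⁻¹ n) {s : ℂ} (hs : 1 < s.re) :
    gaussSum χ ZMod.stdAddChar * LFunction ψ s =
      ∑ a, χ a * sinZeta (a.val / N + 1 / 4 : ℝ) s := by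
  have hsin := hasSum_sum fun (a : ZMod N) (_ : a ∈ Finset.univ) ↦
    (hasSum_nat_sinZeta (a.val / N + 1 / 4 : ℝ) hs).mul_left (χ a)
  have hL := (LSeriesSummable_of_one_lt_re ψ hs).LSeriesHasSum.mul_left
    (gaussSum χ ZMod.stdAddChar)
  rw [LFunction_eq_LSeries ψ hs]
  refine hL.unique (hsin.congr_fun fun n ↦ ?_)
  rcases eq_or_ne n 0 with rfl | hn
  · simp
  · have hψn := hψ n
    simp only [Int.cast_natCast] at hψn
    rw [LSeries.term_of_ne_zero hn, hψn, ← mul_div_assoc, ← sum_mul_sin_of_even heven hprim,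
      Finset.sum_div]
    simp only [mul_div_assoc]

lemma sum_mul_val_reflect_of_even (heven : χ.Even) (hχ : χ ≠ 1) (g : ℕ → ℂ) :
    ∑ a, χ a * g a.val = ∑ a, χ a * g (N - a.val) := by
  have hN : N ≠ 1 := by
    rintro rfl
    exact hχ (level_one χ)
  refine Fintype.sum_equiv (Equiv.neg _) _ _ fun a ↦ ?_
  rw [Equiv.neg_apply, heven.eval_neg, ZMod.neg_val]
  split_ifs with ha
  · rw [ha, χ.map_zero' hN, zero_mul, zero_mul]
  · rw [Nat.sub_sub_self a.val_lt.le]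

lemma sum_mul_val_eq_zero_of_even (heven : χ.Even) (hχ : χ ≠ 1) : ∑ a, χ a * (a.val : ℂ) = 0 := by
  have hreflect := sum_mul_val_reflect_of_even heven hχ fun n ↦ (n : ℂ)
  have hlinear : ∑ a, χ a * ((N - a.val : ℕ) : ℂ) = (∑ a, χ a) * N - ∑ a, χ a * (a.val : ℂ) := by
    rw [Finset.sum_mul, ← Finset.sum_sub_distrib]
    refine Finset.sum_congr rfl fun a _ ↦ ?_
    rw [Nat.cast_sub a.val_lt.le, mul_sub]
  rw [hlinear, MulChar.sum_eq_zero_of_ne_one hχ] at hreflect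
  linear_combination hreflect / 2

lemma sinZeta_add_quarter_one {x : ℝ} (hx0 : 0 ≤ x) (hx1 : x < 1) (hx : x ≠ 3 / 4) :
    sinZeta (x + 1 / 4 : ℝ) 1 = π * (1 / 4 - x + if 3 / 4 < x then 1 else 0) := by
  split_ifs with h
  · have hper : ((x + 1 / 4 : ℝ) : UnitAddCircle) = ((x - 3 / 4 : ℝ) : UnitAddCircle) := by
      rw [← AddCircle.coe_add_period (1 : ℝ) (x - 3 / 4)]
      ring_nf
    rw [hper, sinZeta_one (by linarith) (by linarith)]
    push_cast
    ring
  · rw [sinZeta_one (by linarith) (by linarith [lt_of_le_of_ne (not_lt.1 h) hx])]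
    push_cast
    ring

theorem sum_mul_sinZeta_one_of_even (hN : Odd N) (heven : χ.Even) (hχ : χ ≠ 1) :
    ∑ a, χ a * sinZeta (a.val / N + 1 / 4 : ℝ) 1 =
      π * ∑ a, χ a * if 4 * a.val < N then 1 else 0 := by
  have hN0 : (0 : ℝ) < N := by exact_mod_cast NeZero.pos N
  have hvalue (a : ZMod N) : sinZeta (a.val / N + 1 / 4 : ℝ) 1 =
      π * (1 / 4 - a.val / N + if 3 * N < 4 * a.val then 1 else 0) := by
    have hlt : (3 / 4 : ℝ) < a.val / N ↔ 3 * N < 4 * a.val := by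
      rw [div_lt_div_iff₀ four_pos hN0, mul_comm (a.val : ℝ)]
      exact_mod_cast Iff.rfl
    have hne : (a.val / N : ℝ) ≠ 3 / 4 := by
      rw [Ne, div_eq_div_iff hN0.ne' four_ne_zero]
      have : a.val * 4 ≠ 3 * N := by
        obtain ⟨k, rfl⟩ := hN
        omega
      exact_mod_cast this
    rw [sinZeta_add_quarter_one (by positivity)
      ((div_lt_one hN0).2 (by exact_mod_cast a.val_lt)) hne]
    simp only [hlt]
    push_cast
    rfl
  have hreflect : ∑ a, χ a * (if 3 * N < 4 * a.val then 1 else 0) =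
      ∑ a, χ a * if 4 * a.val < N then 1 else 0 := by
    rw [sum_mul_val_reflect_of_even heven hχ fun n ↦ if 3 * N < 4 * n then 1 else 0]
    refine Finset.sum_congr rfl fun a _ ↦ ?_
    have := a.val_lt
    exact congrArg _ (if_congr (by omega) rfl rfl)
  calc ∑ a, χ a * sinZeta (a.val / N + 1 / 4 : ℝ) 1
    _ = π * (1 / 4 * ∑ a, χ a - 1 / N * ∑ a, χ a * (a.val : ℂ) +
          ∑ a, χ a * if 3 * N < 4 * a.val then 1 else 0) := by
        simp only [hvalue, Finset.mul_sum, ← Finset.sum_sub_distrib, ← Finset.sum_add_distrib]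
        exact Finset.sum_congr rfl fun a _ ↦ by ring
    _ = π * ∑ a, χ a * if 4 * a.val < N then 1 else 0 := by
        rw [MulChar.sum_eq_zero_of_ne_one hχ, sum_mul_val_eq_zero_of_even heven hχ, hreflect]
        ring

theorem pi_mul_sum_range_lt_quarter_of_even (hN : Odd N) (heven : χ.Even) (hprim : χ.IsPrimitive)
    (hχ : χ ≠ 1) {M : ℕ} [NeZero M] {ψ : DirichletCharacter ℂ M}
    (hψ : ∀ n : ℤ, ψ n = (ZMod.χ₄ n : ℤ) * χ⁻¹ n) :
    π * ∑ n ∈ Finset.range N with 4 * n < N, χ n = gaussSum χ ZMod.stdAddChar * LFunction ψ 1 := by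
  have hψ1 : ψ ≠ 1 := by
    rintro rfl
    have hneg := hψ (-1)
    rw [Int.cast_neg, Int.cast_one, MulChar.one_apply isUnit_one.neg, Int.cast_neg, Int.cast_neg,
      Int.cast_one, Int.cast_one, even_inv heven, show ZMod.χ₄ (-1) = -1 by decide] at hneg
    norm_num at hneg
  have hL := ((differentiable_LFunction hψ1).const_mul
    (gaussSum χ ZMod.stdAddChar)).continuous.continuousAt (x := 1)
  have hS : Continuous fun s ↦ ∑ a, χ a * sinZeta (a.val / N + 1 / 4 : ℝ) s :=
    continuous_finsetSum _ fun a _ ↦ (differentiableAt_sinZeta _).continuous.const_mul _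
  rw [eq_at_one_of_eq_on_one_lt_re hL hS.continuousAt fun s hs ↦
      gaussSum_mul_LFunction_eq_sum_sinZeta heven hprim hψ hs,
    sum_mul_sinZeta_one_of_even hN heven hχ, sum_zmod_eq_sum_range, Finset.sum_filter]
  congr 1
  refine Finset.sum_congr rfl fun n hn ↦ ?_
  rw [ZMod.val_cast_of_lt (Finset.mem_range.1 hn), mul_ite, mul_one, mul_zero]

end EvenCharacters

section LegendreCharacter

/-- The Legendre symbol modulo `p` as a Dirichlet character of modulus `p`, with values in an
arbitrary commutative ring. -/
def legendreCharacter (p : ℕ) [Fact p.Prime] (R : Type*) [CommRing R] : DirichletCharacter R p :=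
  (quadraticChar (ZMod p)).ringHomComp (Int.castRingHom R)

variable (p : ℕ) [Fact p.Prime] (R : Type*) [CommRing R]

lemma legendreCharacter_intCast (n : ℤ) : legendreCharacter p R n = legendreSym p n := rfl

lemma legendreCharacter_natCast (n : ℕ) : legendreCharacter p R n = legendreSym p n := by
  exact_mod_cast legendreCharacter_intCast p R n

lemma legendreCharacter_isQuadratic : (legendreCharacter p R).IsQuadratic :=
  (quadraticChar_isQuadratic (ZMod p)).comp _

variable {p R}

lemma legendreCharacter_ne_one [CharZero R] (hp2 : p ≠ 2) : legendreCharacter p R ≠ 1 := by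
  rw [legendreCharacter, MulChar.ringHomComp_ne_one_iff (RingHom.injective_int _)]
  exact quadraticChar_ne_one (by rwa [ZMod.ringChar_zmod_n])

lemma legendreCharacter_even (hp : p % 4 = 1) : (legendreCharacter p R).Even := by
  rw [DirichletCharacter.Even, ← Int.cast_one, ← Int.cast_neg, legendreCharacter_intCast,
    legendreSym.at_neg_one (by omega), ZMod.χ₄_nat_one_mod_four hp, Int.cast_one]

lemma isPrimitive_of_prime {χ : DirichletCharacter R p} (hχ : χ ≠ 1) : χ.IsPrimitive := by
  rcases (Nat.dvd_prime Fact.out).1 χ.conductor_dvd_level with h | h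
  · exact absurd (χ.eq_one_iff_conductor_eq_one.2 h) hχ
  · exact h

end LegendreCharacter

section GaussProductFormula

open Polynomial Finset

lemma sum_eval_eq_neg_coeff {F : Type*} [Field F] [Fintype F] {f : F[X]}
    (hf : f.natDegree < Fintype.card F) :
    ∑ x, f.eval x = -f.coeff (Fintype.card F - 1) := by
  classical
  have hcard : Fintype.card F - 1 + 1 = Fintype.card F := Nat.sub_add_cancel Fintype.card_pos
  have htop : ∑ x : F, x ^ (Fintype.card F - 1) = -1 := by
    have hne : Fintype.card F - 1 ≠ 0 := (Nat.sub_pos_of_lt Fintype.one_lt_card).ne'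
    rw [← add_sum_erase _ _ (mem_univ 0), zero_pow hne, zero_add,
      sum_congr rfl fun x hx ↦ FiniteField.pow_card_sub_one_eq_one x (ne_of_mem_erase hx)]
    simp [card_erase_of_mem, Nat.cast_sub Fintype.card_pos]
  simp_rw [eval_eq_sum_range' hf]
  rw [sum_comm, ← hcard, sum_range_succ, sum_eq_zero, zero_add, ← mul_sum, hcard, htop, mul_neg_one]
  intro i hi
  rw [← mul_sum, FiniteField.sum_pow_lt_card_sub_one _ _ (mem_range.1 hi), mul_zero]

lemma coeff_prod_X_add_one_pow_sub {R : Type*} [CommRing R] (m : ℕ) (a b : ℕ → ℕ) :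
    (∏ k ∈ range m, ((X + 1) ^ a k - (X + 1) ^ b k : R[X])).coeff m =
      ∏ k ∈ range m, ((a k : R) - b k) := by
  have hX (k : ℕ) : ((X + 1) ^ a k - (X + 1) ^ b k : R[X]) =
      X * ((X + 1) ^ a k - (X + 1) ^ b k : R[X]).divX := by
    conv_lhs => rw [← X_mul_divX_add ((X + 1) ^ a k - (X + 1) ^ b k : R[X])]
    simp [coeff_X_add_one_pow]
  rw [prod_congr rfl fun k _ ↦ hX k, prod_mul_distrib, prod_const, card_range,
    coeff_X_pow_mul', if_pos le_rfl, Nat.sub_self, coeff_zero_prod]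
  simp [coeff_divX, coeff_X_add_one_pow]

lemma factorial_two_mul_eq (m : ℕ) :
    (2 * m).factorial = m.factorial * ∏ k ∈ range m, 2 * (2 * k + 1) := by
  induction m with
  | zero => rfl
  | succ m ih =>
    rw [prod_range_succ, Nat.factorial_succ m, show 2 * (m + 1) = 2 * m + 1 + 1 by ring,
      Nat.factorial_succ, Nat.factorial_succ, ih]
    ring

lemma prod_range_two_mul {M : Type*} [CommMonoid M] (f : ℕ → M) (m : ℕ) :
    ∏ j ∈ range (2 * m), f j = ∏ k ∈ range m, f (2 * k) * f (2 * k + 1) := by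
  induction m with
  | zero => rfl
  | succ m ih => rw [mul_add_one, prod_range_succ, prod_range_succ, prod_range_succ, ih, mul_assoc]

lemma prod_pow_odd_sub_sq {R : Type*} [CommRing R] [IsDomain R] {n m : ℕ} {ζ : R}
    (hm : n = 2 * m + 1) (hζ : IsPrimitiveRoot ζ n) :
    (∏ k ∈ range m, (ζ ^ (2 * k + 1) - ζ ^ (n - (2 * k + 1)))) ^ 2 = (-1) ^ m * n := by
  have hζsq : IsPrimitiveRoot (ζ ^ 2) (2 * m + 1) := by
    rw [← hm]
    exact hζ.pow_of_coprime 2 (Nat.coprime_two_left.2 ⟨m, hm⟩)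
  have hfactor : ∀ k ∈ range m, (ζ ^ (2 * k + 1) - ζ ^ (n - (2 * k + 1))) ^ 2 =
      -1 * ((1 - (ζ ^ 2) ^ (2 * k + 1)) * (1 - (ζ ^ 2) ^ (n - (2 * k + 1)))) := by
    intro k hk
    have hinv : ζ ^ (2 * k + 1) * ζ ^ (n - (2 * k + 1)) = 1 := by
      have := mem_range.1 hk
      rw [← pow_add, Nat.add_sub_cancel' (by omega), hζ.pow_eq_one]
    rw [← pow_mul', ← pow_mul', pow_mul', pow_mul']
    linear_combination (ζ ^ (2 * k + 1) * ζ ^ (n - (2 * k + 1)) - 1) * hinv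
  have hreflect : ∏ k ∈ range m, (1 - (ζ ^ 2) ^ (n - (2 * k + 1))) =
      ∏ k ∈ range m, (1 - (ζ ^ 2) ^ (2 * k + 1 + 1)) := by
    rw [← prod_range_reflect]
    refine prod_congr rfl fun k hk ↦ ?_
    have := mem_range.1 hk
    rw [show n - (2 * (m - 1 - k) + 1) = 2 * k + 1 + 1 by omega]
  calc (∏ k ∈ range m, (ζ ^ (2 * k + 1) - ζ ^ (n - (2 * k + 1)))) ^ 2
    _ = (-1) ^ m * ((∏ k ∈ range m, (1 - (ζ ^ 2) ^ (2 * k + 1))) *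
          ∏ k ∈ range m, (1 - (ζ ^ 2) ^ (n - (2 * k + 1)))) := by
        rw [← prod_pow, prod_congr rfl hfactor, prod_mul_distrib, prod_const, card_range,
          prod_mul_distrib]
    _ = (-1) ^ m * ∏ j ∈ range (2 * m), (1 - (ζ ^ 2) ^ (j + 1)) := by
        rw [hreflect, ← prod_mul_distrib, prod_range_two_mul]
    _ = (-1) ^ m * n := by
        rw [hζsq.prod_one_sub_pow_eq_order, hm]
        push_cast
        rfl

variable {p m : ℕ} [Fact p.Prime] {K : Type*} [Field K] {ζ : K}

lemma factorial_mul_sum_legendreSym_mul_choose (hm : p = 2 * m + 1) :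
    (m.factorial : ZMod p) * ∑ j ∈ range p, (legendreSym p j : ZMod p) * j.choose m = -1 := by
  have hmonic : (X ^ m * descPochhammer (ZMod p) m).Monic :=
    (monic_X_pow m).mul (monic_descPochhammer _ m)
  have hdeg : (X ^ m * descPochhammer (ZMod p) m).natDegree = p - 1 := by
    rw [(monic_X_pow m).natDegree_mul (monic_descPochhammer _ m), descPochhammer_natDegree,
      natDegree_X_pow]
    omega
  have hsum := sum_eval_eq_neg_coeff (f := X ^ m * descPochhammer (ZMod p) m)
    (by rw [hdeg, ZMod.card]; exact Nat.sub_lt (NeZero.pos p) one_pos)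
  rw [ZMod.card, ← hdeg, hmonic.coeff_natDegree, sum_zmod_eq_sum_range] at hsum
  rw [← hsum, mul_sum]
  refine sum_congr rfl fun j _ ↦ ?_
  rw [legendreSym.eq_pow, show p / 2 = m by omega, eval_mul, eval_pow, eval_X,
    descPochhammer_eval_eq_descFactorial, Nat.descFactorial_eq_factorial_mul_choose]
  push_cast
  ring

lemma factorial_mul_prod_odd_sub (hm : p = 2 * m + 1) :
    (m.factorial : ZMod p) *
      ∏ k ∈ range m, (((2 * k + 1 : ℕ) : ZMod p) - (p - (2 * k + 1) : ℕ)) = -1 := by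
  have hfactor : ∀ k ∈ range m, ((2 * k + 1 : ℕ) : ZMod p) - (p - (2 * k + 1) : ℕ) =
      (2 * (2 * k + 1) : ℕ) := by
    intro k hk
    have hk' := mem_range.1 hk
    rw [Nat.cast_sub (by omega), CharP.cast_eq_zero (ZMod p) p]
    push_cast
    ring
  rw [prod_congr rfl hfactor, ← Nat.cast_prod, ← Nat.cast_mul, ← factorial_two_mul_eq,
    show 2 * m = p - 1 by omega, ZMod.wilsons_lemma]

lemma X_sub_one_pow_dvd_map_of_aeval_eq_zero [CharZero K] (hζ : IsPrimitiveRoot ζ p) {f : ℤ[X]}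
    (hf : aeval ζ f = 0) : (X - 1) ^ (p - 1) ∣ f.map (Int.castRingHom (ZMod p)) := by
  have hp : p.Prime := Fact.out
  have hdvd : cyclotomic p ℤ ∣ f := by
    rw [cyclotomic_eq_minpoly hζ hp.pos]
    exact minpoly.isIntegrallyClosed_dvd (hζ.isIntegral hp.pos) hf
  have hcyclotomic : (cyclotomic p ℤ).map (Int.castRingHom (ZMod p)) = (X - 1) ^ (p - 1) := by
    simpa using cyclotomic_mul_prime_eq_pow_of_not_dvd (ZMod p) (p := p) (n := 1) hp.not_dvd_one
  rw [← hcyclotomic]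
  exact Polynomial.map_dvd _ hdvd

lemma coeff_comp_X_add_one_eq_zero {R : Type*} [CommRing R] {f : R[X]} {n i : ℕ}
    (hf : (X - 1) ^ n ∣ f) (hi : i < n) : (f.comp (X + 1)).coeff i = 0 := by
  obtain ⟨g, rfl⟩ := hf
  rw [mul_comp, pow_comp, sub_comp, X_comp, one_comp, add_sub_cancel_right, coeff_X_pow_mul',
    if_neg hi.not_ge]

/- The relation `hδ` says that `Φ_p ≡ (X - 1)^(p - 1)` divides a polynomial modulo `p`; in the
variable `X - 1` its coefficient of degree `m < p - 1` must vanish, and this coefficient is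
`(δ - 1) / m!`, by Wilson's theorem. -/
theorem cast_eq_one_of_sum_legendreSym_eq_mul_prod [CharZero K] (hm : p = 2 * m + 1)
    (hζ : IsPrimitiveRoot ζ p) {δ : ℤ}
    (hδ : ∑ j ∈ range p, (legendreSym p j : K) * ζ ^ j =
      δ * ∏ k ∈ range m, (ζ ^ (2 * k + 1) - ζ ^ (p - (2 * k + 1)))) :
    (δ : ZMod p) = 1 := by
  have hp2 := (Fact.out : p.Prime).two_le
  let f : ℤ[X] := ∑ j ∈ range p, C (legendreSym p j) * X ^ j -
    C δ * ∏ k ∈ range m, (X ^ (2 * k + 1) - X ^ (p - (2 * k + 1)))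
  have hf : aeval ζ f = 0 := by
    simpa [f, sub_eq_zero] using hδ
  have hcoeff := coeff_comp_X_add_one_eq_zero (X_sub_one_pow_dvd_map_of_aeval_eq_zero hζ hf)
    (i := m) (by omega)
  have hcomp : (f.map (Int.castRingHom (ZMod p))).comp (X + 1) =
      ∑ j ∈ range p, C (legendreSym p j : ZMod p) * (X + 1) ^ j -
        C (δ : ZMod p) * ∏ k ∈ range m, ((X + 1) ^ (2 * k + 1) - (X + 1) ^ (p - (2 * k + 1))) := by
    simp [f, Polynomial.map_sum, Polynomial.map_prod, Polynomial.sum_comp,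
      Polynomial.prod_comp]
  rw [hcomp, coeff_sub, finsetSum_coeff, coeff_C_mul, coeff_prod_X_add_one_pow_sub] at hcoeff
  simp only [coeff_C_mul, coeff_X_add_one_pow] at hcoeff
  linear_combination δ * factorial_mul_prod_odd_sub hm - factorial_mul_sum_legendreSym_mul_choose hm
    + (m.factorial : ZMod p) * hcoeff

lemma sum_legendreSym_mul_pow_sq [CharZero K] (hm : p = 2 * m + 1) (hζ : IsPrimitiveRoot ζ p) :
    (∑ j ∈ range p, (legendreSym p j : K) * ζ ^ j) ^ 2 = (-1) ^ m * p := by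
  have hp2 : p ≠ 2 := by omega
  have hsum : ∑ j ∈ range p, (legendreSym p j : K) * ζ ^ j =
      gaussSum (legendreCharacter p K) (AddChar.zmodChar p hζ.pow_eq_one) := by
    rw [gaussSum, sum_zmod_eq_sum_range]
    simp only [legendreCharacter_natCast, AddChar.zmodChar_apply']
  have hneg : legendreCharacter p K (-1) = (-1) ^ m := by
    rw [← Int.cast_one, ← Int.cast_neg, legendreCharacter_intCast, legendreSym.at_neg_one hp2,
      ZMod.χ₄_eq_neg_one_pow (by omega), show p / 2 = m by omega]
    push_cast
    rfl
  rw [hsum, gaussSum_sq (χ := legendreCharacter p K) (legendreCharacter_ne_one hp2)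
    (legendreCharacter_isQuadratic p K) (AddChar.zmodChar_primitive_of_primitive_root p hζ), hneg,
    ZMod.card]

theorem sum_legendreSym_mul_pow_eq_prod [CharZero K] (hm : p = 2 * m + 1)
    (hζ : IsPrimitiveRoot ζ p) :
    ∑ j ∈ range p, (legendreSym p j : K) * ζ ^ j =
      ∏ k ∈ range m, (ζ ^ (2 * k + 1) - ζ ^ (p - (2 * k + 1))) := by
  have hsq := (sum_legendreSym_mul_pow_sq hm hζ).trans (prod_pow_odd_sub_sq hm hζ).symm
  refine (sq_eq_sq_iff_eq_or_eq_neg.1 hsq).resolve_right fun hneg ↦ ?_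
  have hp2 : Fact (2 < p) := ⟨(Fact.out : p.Prime).two_le.lt_of_ne (by omega)⟩
  have hδ := cast_eq_one_of_sum_legendreSym_eq_mul_prod hm hζ (δ := -1) (by simpa using hneg)
  exact ZMod.neg_one_ne_one (by simpa using hδ)

end GaussProductFormula

section GaussSumSign

open Complex Finset
open scoped Real

lemma exp_pow_sub_exp_pow_sub {n h : ℕ} (hn : n ≠ 0) (hh : h ≤ n) :
    cexp (2 * π * I / n) ^ h - cexp (2 * π * I / n) ^ (n - h) =
      2 * I * (Real.sin (2 * π * h / n) : ℂ) := by
  have hpow : cexp (2 * π * I / n) ^ h = cexp ((2 * π * h / n : ℝ) * I) := by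
    rw [← Complex.exp_nat_mul]
    push_cast
    ring_nf
  have hroot : cexp (2 * π * I / n) ^ h * cexp (2 * π * I / n) ^ (n - h) = 1 := by
    rw [← pow_add, Nat.add_sub_cancel' hh, (isPrimitiveRoot_exp n hn).pow_eq_one]
  rw [← inv_eq_of_mul_eq_one_right hroot, hpow, ← Complex.exp_neg, ← neg_mul, ofReal_sin,
    Complex.sin]
  linear_combination (cexp (((2 * π * h / n : ℝ) : ℂ) * I) -
    cexp (-((2 * π * h / n : ℝ) : ℂ) * I)) * I_sq

lemma prod_two_I_mul_sin_odd_eq {n t : ℕ} (hn : n = 4 * t + 1) :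
    ∏ k ∈ range (2 * t), 2 * I * (Real.sin (2 * π * (2 * k + 1 : ℕ) / n) : ℂ) =
      (∏ k ∈ range t, 4 * (Real.sin (2 * π * (2 * k + 1 : ℕ) / n) *
        Real.sin (2 * π * (2 * k + 2 : ℕ) / n)) : ℝ) := by
  have hreflect : ∏ k ∈ range t, 2 * I * (Real.sin (2 * π * (2 * (t + k) + 1 : ℕ) / n) : ℂ) =
      ∏ k ∈ range t, 2 * I * (-Real.sin (2 * π * (2 * k + 2 : ℕ) / n) : ℂ) := by
    rw [← prod_range_reflect]
    refine prod_congr rfl fun k hk ↦ ?_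
    have hkt := mem_range.1 hk
    have hn0 : (n : ℝ) ≠ 0 := Nat.cast_ne_zero.2 (by omega)
    rw [← ofReal_neg, ← Real.sin_two_pi_sub,
      show 2 * (t + (t - 1 - k)) + 1 = n - (2 * k + 2) by omega, Nat.cast_sub (by omega), mul_sub,
      sub_div, mul_div_cancel_right₀ _ hn0]
  rw [two_mul t, prod_range_add, hreflect, ← prod_mul_distrib, ofReal_prod]
  refine prod_congr rfl fun k _ ↦ ?_
  push_cast
  linear_combination -4 * sin (2 * π * (2 * k + 1) / n) * sin (2 * π * (2 * k + 2) / n) * I_sq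

lemma prod_sin_mul_sin_pos {n t : ℕ} (hn : n = 4 * t + 1) :
    0 < ∏ k ∈ range t, 4 * (Real.sin (2 * π * (2 * k + 1 : ℕ) / n) *
      Real.sin (2 * π * (2 * k + 2 : ℕ) / n)) := by
  have hn0 : (0 : ℝ) < n := Nat.cast_pos.2 (by omega)
  have hsin {h : ℕ} (h0 : 0 < h) (hh : 2 * h < n) : 0 < Real.sin (2 * π * h / n) := by
    have hh' : (2 * h : ℝ) < n := by exact_mod_cast hh
    refine Real.sin_pos_of_pos_of_lt_pi (by positivity) ((div_lt_iff₀ hn0).2 ?_)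
    nlinarith [Real.pi_pos]
  refine prod_pos fun k hk ↦ ?_
  have hkt := mem_range.1 hk
  exact mul_pos four_pos (mul_pos (hsin (by omega) (by omega)) (hsin (by omega) (by omega)))

lemma gaussSum_legendreCharacter_stdAddChar (p : ℕ) [Fact p.Prime] :
    gaussSum (legendreCharacter p ℂ) ZMod.stdAddChar =
      ∑ j ∈ range p, (legendreSym p j : ℂ) * cexp (2 * π * I / p) ^ j := by
  rw [gaussSum, sum_zmod_eq_sum_range]
  refine sum_congr rfl fun j _ ↦ ?_
  have hstd := ZMod.stdAddChar_coe (N := p) j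
  rw [Int.cast_natCast, Int.cast_natCast] at hstd
  rw [legendreCharacter_natCast, hstd, ← Complex.exp_nat_mul]
  ring_nf

theorem gaussSum_legendreCharacter_eq_sqrt {p : ℕ} [Fact p.Prime] (hp : p % 4 = 1) :
    gaussSum (legendreCharacter p ℂ) ZMod.stdAddChar = (√p : ℝ) := by
  obtain ⟨t, ht⟩ : ∃ t, p = 4 * t + 1 := ⟨p / 4, by omega⟩
  have hm : p = 2 * (2 * t) + 1 := by omega
  have hp0 : p ≠ 0 := by omega
  have hζ := isPrimitiveRoot_exp p hp0
  obtain ⟨x, hx0, hx⟩ : ∃ x : ℝ, 0 < x ∧ gaussSum (legendreCharacter p ℂ) ZMod.stdAddChar = x := by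
    refine ⟨_, prod_sin_mul_sin_pos ht, ?_⟩
    rw [gaussSum_legendreCharacter_stdAddChar, sum_legendreSym_mul_pow_eq_prod hm hζ,
      ← prod_two_I_mul_sin_odd_eq ht]
    refine prod_congr rfl fun k hk ↦ exp_pow_sub_exp_pow_sub hp0 ?_
    have := mem_range.1 hk
    omega
  have hsq : x ^ 2 = p := by
    have h := sum_legendreSym_mul_pow_sq hm hζ
    rw [← gaussSum_legendreCharacter_stdAddChar, hx, (even_two_mul t).neg_one_pow, one_mul] at h
    exact_mod_cast h
  rw [hx, ← hsq, Real.sqrt_sq hx0.le]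

end GaussSumSign

lemma filter_range_lt_div_four (N : ℕ) :
    (Finset.range N).filter (fun n : ℕ => 0 < n ∧ (n : ℚ) < (N : ℚ) / 4) =
      ((Finset.range N).filter (fun n ↦ 4 * n < N)).erase 0 := by
  ext n
  have h : (n : ℚ) < N / 4 ↔ 4 * n < N := by
    rw [lt_div_iff₀' four_pos]
    exact_mod_cast Iff.rfl
  simp only [Finset.mem_filter, Finset.mem_erase, h, Nat.pos_iff_ne_zero]
  tauto

end QuadraticExcess

/-- Theorem 7.3: if `p ≡ 1 mod 4` is prime and `χ` is the Dirichlet character of modulus `4p`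
with `χ(n) = χ₄(n) χ_p(n)` for all integers `n`, then
`∑_{0<n<p/4} χ_p(n) = (√p/π) L(1, χ)`. -/
theorem quadratic_excess_quarter_eq (p : ℕ) [hp : Fact p.Prime] (h1 : p % 4 = 1)
    (χ : DirichletCharacter ℂ (4 * p))
    (hχ : ∀ n : ℤ, χ ((n : ZMod (4 * p)))
        = ((ZMod.χ₄ ((n : ZMod 4)) : ℤ) : ℂ) * ((legendreSym p n : ℤ) : ℂ)) :
    (((∑ n ∈ (Finset.range p).filter (fun n : ℕ => 0 < n ∧ (n : ℚ) < (p : ℚ) / 4),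
        legendreSym p (n : ℤ) : ℤ)) : ℂ)
      = ((Real.sqrt p / Real.pi : ℝ) : ℂ) *
          @DirichletCharacter.LFunction (4 * p)
            ⟨mul_ne_zero (by norm_num) hp.out.ne_zero⟩ χ 1 := by
  have : NeZero (4 * p) := ⟨mul_ne_zero (by norm_num) hp.out.ne_zero⟩
  have hne := QuadraticExcess.legendreCharacter_ne_one (R := ℂ) (p := p) (by omega)
  have hψ (n : ℤ) : χ n = (ZMod.χ₄ n : ℤ) * (QuadraticExcess.legendreCharacter p ℂ)⁻¹ n := by
    rw [(QuadraticExcess.legendreCharacter_isQuadratic p ℂ).inv, hχ,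
      QuadraticExcess.legendreCharacter_intCast]
  have hquarter := QuadraticExcess.pi_mul_sum_range_lt_quarter_of_even
    (Nat.odd_iff.2 (by omega)) (QuadraticExcess.legendreCharacter_even h1)
    (QuadraticExcess.isPrimitive_of_prime hne) hne hψ
  rw [QuadraticExcess.gaussSum_legendreCharacter_eq_sqrt h1] at hquarter
  simp only [QuadraticExcess.legendreCharacter_natCast] at hquarter
  have hpi : (Real.pi : ℂ) ≠ 0 := Complex.ofReal_ne_zero.2 Real.pi_ne_zero
  rw [QuadraticExcess.filter_range_lt_div_four, Finset.sum_erase _ (by simp), Complex.ofReal_div,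
    div_mul_eq_mul_div, eq_div_iff hpi, ← hquarter, mul_comm]
  push_cast
  rfl
end

section
/- Let p be an odd prime and let ζ = exp(2πi/p) ∈ ℂ. The quadratic Gauss sum G(1, p) = ∑_{n=0}^{p-1} χ_p(n)·ζ^n satisfies: G(1, p) = √p if p ≡ 1 (mod 4), and G(1, p) = i·√p if p ≡ 3 (mod 4). -/
/-!
Gauss's argument. Evaluating the alternating sum of the `q`-binomial coefficients `[2m, j]` at a
root of unity of odd order `n = 2m + 1` turns the sum of `ζ ^ (j ^ 2)` into the product of the
differences `ζ ^ (2k + 1) - ζ ^ (-(2k + 1)) = 2i sin (2π(2k + 1) / n)` with `k < m`. The signs of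
these sines give the argument of the sum, and its modulus `√n` comes from orthogonality of
characters. For `n = p` prime, the sum over squares is the Gauss sum of the Legendre symbol, because
`a` has `χ_p(a) + 1` square roots.
-/

open Finset
open Complex (I exp)
open scoped ComplexConjugate Real

/-- The `q`-binomial (Gaussian binomial) coefficient `[n, j]`, defined for every `q` by the
`q`-Pascal rule, since the quotient of `q`-factorials is `0 / 0` at roots of unity. -/
def qBinom {R : Type*} [Semiring R] (q : R) : ℕ → ℕ → R
  | _, 0 => 1
  | 0, _ + 1 => 0
  | n + 1, j + 1 => qBinom q n j + q ^ (j + 1) * qBinom q n (j + 1)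

namespace qBinom

section Semiring

variable {R : Type*} [Semiring R] (q : R)

@[simp]
lemma zero_right (n : ℕ) : qBinom q n 0 = 1 := by cases n <;> rfl

lemma succ_succ (n j : ℕ) :
    qBinom q (n + 1) (j + 1) = qBinom q n j + q ^ (j + 1) * qBinom q n (j + 1) := rfl

lemma eq_zero_of_lt {n j : ℕ} (h : n < j) : qBinom q n j = 0 := by
  induction n generalizing j with
  | zero => obtain ⟨j, rfl⟩ := Nat.exists_eq_add_one.2 h; rfl
  | succ n ih =>
    obtain ⟨j, rfl⟩ := Nat.exists_eq_add_one.2 (Nat.zero_lt_of_lt h)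
    rw [succ_succ, ih (by lia), ih (by lia), mul_zero, add_zero]

end Semiring

variable {R : Type*} [CommRing R]

lemma one_sub_pow_mul_succ_succ (q : R) (n j : ℕ) :
    (1 - q ^ (j + 1)) * qBinom q (n + 1) (j + 1) = (1 - q ^ (n + 1)) * qBinom q n j := by
  induction n generalizing j with
  | zero => cases j <;> simp [qBinom]
  | succ n ih =>
    cases j with
    | zero =>
      have h := ih 0
      simp only [succ_succ, zero_right] at h ⊢
      linear_combination q * h
    | succ j =>
      rw [succ_succ q (n + 1)]
      linear_combination
        q ^ (j + 2) * ih (j + 1) + q * ih j - q * (1 - q ^ (n + 1)) * succ_succ q n j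

lemma pow_mul_one_sub_pow_mul_succ_right (q : R) (n j : ℕ) :
    q ^ (j + 1) * (1 - q ^ (j + 1)) * qBinom q n (j + 1) =
      (q ^ (j + 1) - q ^ (n + 1)) * qBinom q n j := by
  linear_combination one_sub_pow_mul_succ_succ q n j - (1 - q ^ (j + 1)) * succ_succ q n j

lemma alternating_sum_add_two (q : R) (n : ℕ) :
    ∑ j ∈ range (n + 3), (-1) ^ j * qBinom q (n + 2) j =
      (1 - q ^ (n + 1)) * ∑ j ∈ range (n + 1), (-1) ^ j * qBinom q n j := by
  have telescope (j : ℕ) : (-1) ^ (j + 1) * qBinom q (n + 2) (j + 1) =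
      (-1) ^ (j + 1) * qBinom q (n + 1) (j + 1) - (-1) ^ j * qBinom q (n + 1) j +
        (1 - q ^ (n + 1)) * ((-1) ^ j * qBinom q n j) := by
    rw [succ_succ q (n + 1)]
    linear_combination (-1) ^ j * one_sub_pow_mul_succ_succ q n j
  rw [sum_range_succ', sum_congr rfl fun j _ => telescope j, sum_add_distrib,
    sum_range_sub fun j => (-1) ^ j * qBinom q (n + 1) j, ← mul_sum, sum_range_succ _ (n + 1),
    eq_zero_of_lt q (by lia : n + 1 < n + 2), eq_zero_of_lt q (by lia : n < n + 1)]
  simp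

lemma alternating_sum_two_mul (q : R) (m : ℕ) :
    ∑ j ∈ range (2 * m + 1), (-1) ^ j * qBinom q (2 * m) j =
      ∏ k ∈ range m, (1 - q ^ (2 * k + 1)) := by
  induction m with
  | zero => simp
  | succ m ih => rw [prod_range_succ, ← ih, Nat.mul_succ, alternating_sum_add_two, mul_comm]

lemma mul_pow_choose_two_of_isPrimitiveRoot [IsDomain R] {q : R} {n : ℕ}
    (hq : IsPrimitiveRoot q (n + 1)) {j : ℕ} (hj : j ≤ n) :
    (-1) ^ j * qBinom q n j * q ^ (j + 1).choose 2 = 1 := by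
  induction j with
  | zero => simp
  | succ j ih =>
    have hne : 1 - q ^ (j + 1) ≠ 0 :=
      sub_ne_zero.2 (hq.pow_ne_one_of_pos_of_lt j.succ_ne_zero (by lia)).symm
    have neg_left : q ^ (j + 1) * qBinom q n (j + 1) = -qBinom q n j := by
      apply mul_left_cancel₀ hne
      linear_combination pow_mul_one_sub_pow_mul_succ_right q n j - qBinom q n j * hq.pow_eq_one
    rw [Nat.choose_succ_succ', Nat.choose_one_right, pow_add]
    linear_combination ih (by lia) - (-1) ^ j * q ^ (j + 1).choose 2 * neg_left

end qBinom

lemma sum_zmod_val {M : Type*} [AddCommMonoid M] (n : ℕ) [NeZero n] (f : ℕ → M) :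
    ∑ x : ZMod n, f x.val = ∑ j ∈ range n, f j := by
  cases n with
  | zero => exact absurd rfl (NeZero.ne 0)
  | succ n => exact Fin.sum_univ_eq_sum_range f (n + 1)

lemma sum_zmod_natCast {M : Type*} [AddCommMonoid M] (n : ℕ) [NeZero n] (f : ZMod n → M) :
    ∑ j ∈ range n, f j = ∑ x, f x := by
  simp only [← sum_zmod_val, ZMod.natCast_zmod_val]

lemma sum_zmodChar_sq {R : Type*} [CommSemiring R] {n : ℕ} [NeZero n] {z : R} (hz : z ^ n = 1) :
    ∑ x, AddChar.zmodChar n hz (x ^ 2) = ∑ j ∈ range n, z ^ j ^ 2 := by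
  rw [← sum_zmod_natCast]
  exact sum_congr rfl fun j _ => by rw [← Nat.cast_pow, AddChar.zmodChar_apply']

lemma sum_pow_sq_eq_mul_sum_pow_mul_succ {R : Type*} [CommSemiring R] {z : R} {m : ℕ}
    (hz : z ^ (2 * m + 1) = 1) :
    ∑ j ∈ range (2 * m + 1), z ^ j ^ 2 =
      z ^ m ^ 2 * ∑ j ∈ range (2 * m + 1), z ^ (j * (j + 1)) := by
  rw [← sum_zmodChar_sq hz, ← Equiv.sum_comp (Equiv.subRight (m : ZMod (2 * m + 1))),
    ← sum_zmod_natCast, mul_sum]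
  refine sum_congr rfl fun j _ => ?_
  have two_mul_add_one : 2 * (m : ZMod (2 * m + 1)) + 1 = 0 := by
    exact_mod_cast ZMod.natCast_self (2 * m + 1)
  have complete_square : (j - m : ZMod (2 * m + 1)) ^ 2 =
      ((m ^ 2 + j * (j + 1) : ℕ) : ZMod (2 * m + 1)) := by
    push_cast
    linear_combination -(j : ZMod (2 * m + 1)) * two_mul_add_one
  rw [Equiv.subRight_apply, complete_square, AddChar.zmodChar_apply', pow_add]

lemma pow_sq_eq_prod_pow_odd {M : Type*} [CommMonoid M] (z : M) (m : ℕ) :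
    z ^ m ^ 2 = ∏ k ∈ range m, z ^ (2 * k + 1) := by
  rw [prod_pow_eq_pow_sum]
  congr 1
  induction m with
  | zero => rfl
  | succ m ih => rw [sum_range_succ, ← ih]; ring

lemma sum_pow_choose_two_eq_prod {K : Type*} [Field K] {q : K} {m : ℕ}
    (hq : IsPrimitiveRoot q (2 * m + 1)) :
    ∑ j ∈ range (2 * m + 1), q ^ (j + 1).choose 2 =
      ∏ k ∈ range m, (1 - (q ^ (2 * k + 1))⁻¹) := by
  simp only [← inv_pow]
  rw [← qBinom.alternating_sum_two_mul]
  refine sum_congr rfl fun j hj => ?_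
  rw [eq_inv_of_mul_eq_one_left (qBinom.mul_pow_choose_two_of_isPrimitiveRoot hq.inv
    (mem_range_succ_iff.1 hj)), inv_pow, inv_inv]

theorem sum_pow_sq_eq_prod {K : Type*} [Field K] {z : K} {n : ℕ} (hn : Odd n)
    (hz : IsPrimitiveRoot z n) :
    ∑ j ∈ range n, z ^ j ^ 2 =
      ∏ k ∈ range (n / 2), (z ^ (2 * k + 1) - (z ^ (2 * k + 1))⁻¹) := by
  obtain ⟨m, rfl⟩ := hn
  have hsq : IsPrimitiveRoot (z ^ 2) (2 * m + 1) := hz.pow_of_coprime 2 (by simp)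
  have pow_mul_succ (j : ℕ) : z ^ (j * (j + 1)) = (z ^ 2) ^ (j + 1).choose 2 := by
    rw [← pow_mul, Nat.choose_two_right, Nat.two_mul_div_two_of_even (Nat.even_mul_pred_self _),
      Nat.add_sub_cancel, mul_comm j]
  rw [sum_pow_sq_eq_mul_sum_pow_mul_succ hz.pow_eq_one, sum_congr rfl fun j _ => pow_mul_succ j,
    sum_pow_choose_two_eq_prod hsq, show (2 * m + 1) / 2 = m by lia, pow_sq_eq_prod_pow_odd,
    ← prod_mul_distrib]
  refine prod_congr rfl fun k _ => ?_
  have hne : z ^ (2 * k + 1) ≠ 0 := pow_ne_zero _ (hz.ne_zero (by lia))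
  rw [pow_right_comm]
  field_simp

lemma sum_addChar_sq_mul_sum_addChar_neg_sq {R R' : Type*} [CommRing R] [Fintype R] [CommRing R']
    [IsDomain R'] (h2 : IsUnit (2 : R)) {ψ : AddChar R R'} (hψ : ψ.IsPrimitive) :
    (∑ x, ψ (x ^ 2)) * ∑ x, ψ (-x ^ 2) = Fintype.card R := by
  classical
  calc (∑ x, ψ (x ^ 2)) * ∑ x, ψ (-x ^ 2)
    _ = ∑ y, ∑ x, ψ (x ^ 2 - y ^ 2) := by
      simp only [sum_mul_sum, sub_eq_add_neg, AddChar.map_add_eq_mul]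
      exact sum_comm
    _ = ∑ y, ∑ d, ψ ((d + y) ^ 2 - y ^ 2) :=
      sum_congr rfl fun y _ => (Equiv.sum_comp (Equiv.addRight y) fun x => ψ (x ^ 2 - y ^ 2)).symm
    _ = ∑ d, ψ (d ^ 2) * ∑ y, ψ (y * (2 * d)) := by
      rw [sum_comm]
      simp only [mul_sum, ← AddChar.map_add_eq_mul]
      exact sum_congr rfl fun d _ => sum_congr rfl fun y _ => by ring_nf
    _ = Fintype.card R := by
      simp [AddChar.sum_mulShift _ hψ, h2.mul_right_eq_zero]

lemma norm_sum_addChar_sq {R : Type*} [CommRing R] [Fintype R] (h2 : IsUnit (2 : R))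
    {ψ : AddChar R ℂ} (hψ : ψ.IsPrimitive) : ‖∑ x, ψ (x ^ 2)‖ = √(Fintype.card R) := by
  have mul_conj : (∑ x, ψ (x ^ 2)) * conj (∑ x, ψ (x ^ 2)) = Fintype.card R := by
    simp only [map_sum, ← AddChar.map_neg_eq_conj, sum_addChar_sq_mul_sum_addChar_neg_sq h2 hψ]
  rw [Complex.mul_conj'] at mul_conj
  rw [eq_comm, Real.sqrt_eq_iff_eq_sq (by positivity) (norm_nonneg _)]
  exact_mod_cast mul_conj.symm

lemma norm_sum_pow_sq {n : ℕ} (hn : Odd n) {z : ℂ} (hz : IsPrimitiveRoot z n) :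
    ‖∑ j ∈ range n, z ^ j ^ 2‖ = √n := by
  have : NeZero n := ⟨hn.pos.ne'⟩
  have h2 : IsUnit (2 : ZMod n) := by
    exact_mod_cast (ZMod.isUnit_iff_coprime 2 n).2 (Nat.coprime_two_left.2 hn)
  rw [← sum_zmodChar_sq hz.pow_eq_one,
    norm_sum_addChar_sq h2 (AddChar.zmodChar_primitive_of_primitive_root n hz), ZMod.card]

lemma prod_range_add_eq_pow_mul_norm {f : ℕ → ℂ} {u v : ℂ} {a b : ℕ}
    (hu : ∀ k < a, f k = u * ‖f k‖) (hv : ∀ k < b, f (a + k) = v * ‖f (a + k)‖) :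
    ∏ k ∈ range (a + b), f k = u ^ a * v ^ b * ‖∏ k ∈ range (a + b), f k‖ := by
  rw [norm_prod, prod_range_add, prod_range_add, prod_congr rfl fun k hk => hu k (mem_range.1 hk),
    prod_congr rfl fun k hk => hv k (mem_range.1 hk)]
  simp only [prod_mul_distrib, prod_const, card_range]
  push_cast
  ring

lemma exp_mul_I_sub_inv (θ : ℝ) :
    exp (θ * I) - (exp (θ * I))⁻¹ = I * (2 * Real.sin θ : ℝ) := by
  push_cast
  rw [Complex.two_sin, neg_mul, Complex.exp_neg]
  linear_combination (exp (θ * I) - (exp (θ * I))⁻¹) * Complex.I_sq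

lemma exp_two_pi_mul_I_div_pow (n k : ℕ) :
    exp (2 * π * I / n) ^ k = exp ((2 * π * k / n : ℝ) * I) := by
  rw [← Complex.exp_nat_mul]
  push_cast
  ring_nf

lemma exp_pow_sub_inv_of_two_mul_le {n k : ℕ} (h : 2 * k ≤ n) :
    exp (2 * π * I / n) ^ k - (exp (2 * π * I / n) ^ k)⁻¹ =
      I * ‖exp (2 * π * I / n) ^ k - (exp (2 * π * I / n) ^ k)⁻¹‖ := by
  have le_pi : 2 * π * k / n ≤ π := by
    have : (2 * k : ℝ) ≤ n := mod_cast h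
    refine div_le_of_le_mul₀ n.cast_nonneg Real.pi_nonneg ?_
    nlinarith [Real.pi_pos]
  have sin_nonneg : 0 ≤ Real.sin (2 * π * k / n) :=
    Real.sin_nonneg_of_nonneg_of_le_pi (by positivity) le_pi
  rw [exp_two_pi_mul_I_div_pow, exp_mul_I_sub_inv, norm_mul, Complex.norm_I, one_mul,
    Complex.norm_of_nonneg (by positivity)]

lemma exp_pow_sub_inv_of_le_two_mul {n k : ℕ} (hn : 0 < n) (h : n ≤ 2 * k) (hk : k ≤ n) :
    exp (2 * π * I / n) ^ k - (exp (2 * π * I / n) ^ k)⁻¹ =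
      -I * ‖exp (2 * π * I / n) ^ k - (exp (2 * π * I / n) ^ k)⁻¹‖ := by
  have reflect : exp (2 * π * I / n) ^ k = (exp (2 * π * I / n) ^ (n - k))⁻¹ :=
    eq_inv_of_mul_eq_one_left <| by
      rw [← pow_add, Nat.add_sub_cancel' hk, (Complex.isPrimitiveRoot_exp n hn.ne').pow_eq_one]
  rw [reflect, inv_inv, norm_sub_rev, neg_mul,
    ← exp_pow_sub_inv_of_two_mul_le (by lia : 2 * (n - k) ≤ n), neg_sub]

theorem sum_exp_pow_sq {n : ℕ} (hn : Odd n) :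
    ∑ j ∈ range n, exp (2 * π * I / n) ^ j ^ 2 = I ^ ((n + 1) / 4) * (-I) ^ (n / 4) * √n := by
  have hz : IsPrimitiveRoot (exp (2 * π * I / n)) n := Complex.isPrimitiveRoot_exp n hn.pos.ne'
  rw [← norm_sum_pow_sq hn hz, sum_pow_sq_eq_prod hn hz,
    show n / 2 = (n + 1) / 4 + n / 4 by obtain ⟨m, rfl⟩ := hn; lia]
  exact prod_range_add_eq_pow_mul_norm (fun k hk => exp_pow_sub_inv_of_two_mul_le (by lia))
    fun k hk => exp_pow_sub_inv_of_le_two_mul hn.pos (by lia) (by lia)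

lemma I_pow_mul_neg_I_pow (t : ℕ) : I ^ t * (-I) ^ t = 1 := by
  rw [← mul_pow, mul_neg, Complex.I_mul_I, neg_neg, one_pow]

theorem sum_exp_pow_sq_of_mod_four_eq_one {n : ℕ} (hn : n % 4 = 1) :
    ∑ j ∈ range n, exp (2 * π * I / n) ^ j ^ 2 = √n := by
  rw [sum_exp_pow_sq (Nat.odd_iff.2 (Nat.odd_of_mod_four_eq_one hn)),
    show (n + 1) / 4 = n / 4 by lia, I_pow_mul_neg_I_pow, one_mul]

theorem sum_exp_pow_sq_of_mod_four_eq_three {n : ℕ} (hn : n % 4 = 3) :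
    ∑ j ∈ range n, exp (2 * π * I / n) ^ j ^ 2 = I * √n := by
  rw [sum_exp_pow_sq (Nat.odd_iff.2 (Nat.odd_of_mod_four_eq_three hn)),
    show (n + 1) / 4 = n / 4 + 1 by lia, pow_succ', mul_assoc I, I_pow_mul_neg_I_pow,
    mul_one]

section GaussSum

variable {R : Type*} [CommRing R] [IsDomain R]

lemma sum_addChar_sq_eq_gaussSum {F : Type*} [Field F] [Fintype F] [DecidableEq F]
    (hF : ringChar F ≠ 2) {ψ : AddChar F R} (hψ : ψ ≠ 1) :
    ∑ x, ψ (x ^ 2) = gaussSum ((quadraticChar F).ringHomComp (Int.castRingHom R)) ψ := by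
  have card_sqrts (a : F) : (#{x : F | x ^ 2 = a} : R) = quadraticChar F a + 1 := by
    have h := quadraticChar_card_sqrts hF a
    rw [Set.toFinset_ofPred] at h
    exact_mod_cast congrArg (Int.cast (R := R)) h
  calc ∑ x, ψ (x ^ 2)
    _ = ∑ a, ∑ x with x ^ 2 = a, ψ (x ^ 2) := (sum_fiberwise univ (· ^ 2) _).symm
    _ = ∑ a, (quadraticChar F a + 1 : R) * ψ a := by
      refine sum_congr rfl fun a _ => ?_
      rw [sum_congr rfl fun x hx => congrArg ψ (mem_filter.1 hx).2, sum_const, nsmul_eq_mul,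
        card_sqrts]
    _ = gaussSum ((quadraticChar F).ringHomComp (Int.castRingHom R)) ψ := by
      simp only [add_one_mul, sum_add_distrib, AddChar.sum_eq_zero_of_ne_one hψ, add_zero]
      rfl

lemma sum_legendreSym_mul_pow {p : ℕ} [Fact p.Prime] (hp2 : p ≠ 2) {z : R}
    (hz : IsPrimitiveRoot z p) :
    ∑ j ∈ range p, (legendreSym p j : R) * z ^ j = ∑ j ∈ range p, z ^ j ^ 2 := by
  have hψ : AddChar.zmodChar p hz.pow_eq_one ≠ 1 :=
    AddChar.zmod_char_ne_one_iff p _ |>.2 <| by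
      rw [← Nat.cast_one, AddChar.zmodChar_apply', pow_one]
      exact hz.ne_one (Fact.out : p.Prime).one_lt
  rw [← sum_zmodChar_sq hz.pow_eq_one,
    sum_addChar_sq_eq_gaussSum ((ZMod.ringChar_zmod_n p).substr hp2) hψ, gaussSum,
    ← sum_zmod_natCast]
  simp [legendreSym, AddChar.zmodChar_apply']

end GaussSum

/-- Theorem 7.6 (Gauss): the value of the quadratic Gauss sum
`G(1, p) = ∑_{n=0}^{p-1} χ_p(n) ζ^n` with `ζ = exp(2πi/p)` is `√p` if `p ≡ 1 mod 4` and
`i √p` if `p ≡ 3 mod 4`. -/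
theorem gauss_sum_value (p : ℕ) [Fact p.Prime] (hp2 : p ≠ 2) :
    (p % 4 = 1 →
      ∑ n ∈ Finset.range p, ((legendreSym p (n : ℤ) : ℤ) : ℂ) *
          Complex.exp (2 * (Real.pi : ℂ) * Complex.I / (p : ℂ)) ^ n
        = ((Real.sqrt p : ℝ) : ℂ)) ∧
    (p % 4 = 3 →
      ∑ n ∈ Finset.range p, ((legendreSym p (n : ℤ) : ℤ) : ℂ) *
          Complex.exp (2 * (Real.pi : ℂ) * Complex.I / (p : ℂ)) ^ n
        = Complex.I * ((Real.sqrt p : ℝ) : ℂ)) := by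
  have hz := Complex.isPrimitiveRoot_exp p (Fact.out : p.Prime).ne_zero
  rw [sum_legendreSym_mul_pow hp2 hz]
  exact ⟨sum_exp_pow_sq_of_mod_four_eq_one, sum_exp_pow_sq_of_mod_four_eq_three⟩
end

section
/- Let W = {z₁ < z₂ < ⋯ < z_r} be a nonempty finite set of nonnegative integers and let ε : {1, …, r} → {-1, 1}. For an odd prime p, let c_ε(p) be the number of integers n ≥ 1 with n + z_r ≤ p - 1 such that χ_p(n + z_i) = ε(i) for all i ∈ {1, …, r}, and let c_σ(p) be the number of integers n ≥ 1 with n + z_r ≤ p - 1 such that for every integer m with n + z₁ ≤ m ≤ n + z_r one has χ_p(m) = 1 if and only if m ∈ {n + z₁, …, n + z_r}. Then, as p → ∞ through the primes, c_ε(p)/p → 2^{-r} and c_σ(p)/p → 2^{-(1 + z_r - z₁)}. -/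
/-!
The product `∏ w ∈ W, (1 + ε w * χ_p (n + w))` is `2 ^ #W` if `n` realises the pattern `ε` and `0`
otherwise, apart from a bounded number of `n`. Expanded and summed over `n`, it gives `p` plus a
signed sum of the correlations `∑ n, ∏ w ∈ S, χ_p (n + w)` with `S` nonempty, and these are `o(p)`.
Prescribing the support of the residues in an interval is prescribing a pattern on that interval.

The estimate of the correlations is Stepanov's method. Let `f` be a polynomial over a field with `q`
elements, not a constant times a square. If `χ (f x) = a = ±1`, then `f x ^ ((q - 1) / 2) = a` and
`x ^ q = x`, so that for `h = ∑ j ≤ K, (u j + f ^ ((q - 1) / 2) * v j) * X ^ (q * j)` the vanishing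
at all such `x` of the derivatives of `h` of order less than `2 * K` follows from few linear
conditions on the `u j` and `v j`. A solution with `h ≠ 0` has a root of multiplicity `2 * K` at
each such `x`, while its degree is about `K * q`, so that there are at most about `q / 2` such `x`
for either sign `a`.
-/

section TwistedDerivative

open Polynomial

variable {R : Type*} [CommRing R]

/-- The operators `T₀, T₁, …` on polynomials determined, for regular `f`, by
`f ^ k * D ^ k (f ^ e * v) = f ^ e * T_k v`. They express that, up to the factor `f ^ e`, the
derivatives of `f ^ e * v` have small degree even when `e` is large. -/
noncomputable def twistedDerivative (f : R[X]) (e : ℕ) : ℕ → R[X] →ₗ[R] R[X]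
  | 0 => LinearMap.id
  | k + 1 => (LinearMap.mulLeft R f ∘ₗ derivative +
      LinearMap.mulLeft R (((e : R[X]) - k) * derivative f)) ∘ₗ twistedDerivative f e k

theorem twistedDerivative_succ_apply (f : R[X]) (e k : ℕ) (v : R[X]) :
    twistedDerivative f e (k + 1) v = f * derivative (twistedDerivative f e k v) +
      ((e : R[X]) - k) * derivative f * twistedDerivative f e k v :=
  rfl

theorem mul_derivative_pow_self (f : R[X]) (n : ℕ) :
    f * derivative (f ^ n) = n * f ^ n * derivative f := by
  cases n with
  | zero => simp
  | succ n => rw [derivative_pow_succ, map_add, map_natCast, C_1]; push_cast; ring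

theorem pow_mul_iterate_derivative_pow_mul (f : R[X]) (e k : ℕ) (v : R[X]) :
    f ^ k * derivative^[k] (f ^ e * v) = f ^ e * twistedDerivative f e k v := by
  induction k with
  | zero => simp [twistedDerivative]
  | succ k ih =>
    have derivative_ih := congrArg derivative ih
    rw [derivative_mul, derivative_mul] at derivative_ih
    rw [Function.iterate_succ_apply', twistedDerivative_succ_apply]
    linear_combination f * derivative_ih
      - derivative^[k] (f ^ e * v) * mul_derivative_pow_self f k
      + twistedDerivative f e k v * mul_derivative_pow_self f e - k * derivative f * ih

theorem natDegree_twistedDerivative_le (f : R[X]) (e k : ℕ) (v : R[X]) :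
    (twistedDerivative f e k v).natDegree ≤ v.natDegree + k * f.natDegree := by
  induction k with
  | zero => simp [twistedDerivative]
  | succ k ih =>
    have natDegree_coeff : ((e : R[X]) - (k : R[X])).natDegree = 0 := by
      simpa using natDegree_C ((e : R) - k)
    have hf := natDegree_derivative_le f
    have hv := natDegree_derivative_le (twistedDerivative f e k v)
    rw [twistedDerivative_succ_apply, add_mul]
    refine natDegree_add_le_of_degree_le (natDegree_mul_le.trans (by omega))
      (natDegree_mul_le.trans ?_)
    have := natDegree_mul_le (p := (e : R[X]) - (k : R[X])) (q := derivative f)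
    omega

end TwistedDerivative

section AuxiliaryPolynomial

open Polynomial

theorem iterate_derivative_mul_of_derivative_eq_zero {R : Type*} [CommSemiring R] {g : R[X]}
    (hg : derivative g = 0) (k : ℕ) (u : R[X]) :
    derivative^[k] (u * g) = derivative^[k] u * g := by
  induction k with
  | zero => rfl
  | succ k ih =>
    rw [Function.iterate_succ_apply', ih, derivative_mul, hg, mul_zero, add_zero,
      Function.iterate_succ_apply']

variable {R : Type*} [CommRing R] {J : ℕ}

/-- Stepanov's auxiliary polynomial `∑ j, (u j + f ^ e * v j) * X ^ (q * j)`, where `w j` is the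
pair `(u j, v j)`. -/
noncomputable def stepanovPoly (f : R[X]) (e q : ℕ) (w : Fin J → R[X] × R[X]) : R[X] :=
  ∑ j, ((w j).1 + f ^ e * (w j).2) * X ^ (q * (j : ℕ))

/-- A polynomial of small degree, linear in `w`, which agrees with `f ^ k * D ^ k h` for
`h = stepanovPoly f e q w` at every `x` with `x ^ q = x` and `f x ^ e = a`. -/
noncomputable def reducedDerivative (f : R[X]) (e : ℕ) (a : R) (k : ℕ) :
    (Fin J → R[X] × R[X]) →ₗ[R] R[X] :=
  ∑ j : Fin J, LinearMap.mulRight R (X ^ (j : ℕ)) ∘ₗ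
    (twistedDerivative f 0 k ∘ₗ LinearMap.fst R R[X] R[X] +
      a • twistedDerivative f e k ∘ₗ LinearMap.snd R R[X] R[X]) ∘ₗ LinearMap.proj j

theorem reducedDerivative_apply (f : R[X]) (e : ℕ) (a : R) (k : ℕ) (w : Fin J → R[X] × R[X]) :
    reducedDerivative f e a k w = ∑ j, (twistedDerivative f 0 k (w j).1 +
      a • twistedDerivative f e k (w j).2) * X ^ (j : ℕ) := by
  simp [reducedDerivative, LinearMap.sum_apply]

theorem pow_mul_iterate_derivative_stepanovPoly (f : R[X]) (e : ℕ) {q : ℕ} (hq : (q : R) = 0)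
    (k : ℕ) (w : Fin J → R[X] × R[X]) :
    f ^ k * derivative^[k] (stepanovPoly f e q w) = ∑ j, (twistedDerivative f 0 k (w j).1 +
      f ^ e * twistedDerivative f e k (w j).2) * X ^ (q * (j : ℕ)) := by
  rw [stepanovPoly, iterate_derivative_sum, Finset.mul_sum]
  refine Finset.sum_congr rfl fun j _ => ?_
  have derivative_X_pow_mul : derivative (X ^ (q * (j : ℕ)) : R[X]) = 0 := by
    simp [derivative_X_pow, hq]
  have h₀ := pow_mul_iterate_derivative_pow_mul f 0 k (w j).1
  simp only [pow_zero, one_mul] at h₀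
  rw [iterate_derivative_mul_of_derivative_eq_zero derivative_X_pow_mul, iterate_map_add,
    ← mul_assoc, mul_add, h₀, pow_mul_iterate_derivative_pow_mul]

theorem eval_reducedDerivative (f : R[X]) {e q : ℕ} (hq : (q : R) = 0) {a x : R} (hx : x ^ q = x)
    (ha : f.eval x ^ e = a) (k : ℕ) (w : Fin J → R[X] × R[X]) :
    (reducedDerivative f e a k w).eval x =
      f.eval x ^ k * (derivative^[k] (stepanovPoly f e q w)).eval x := by
  rw [← eval_pow, ← eval_mul, pow_mul_iterate_derivative_stepanovPoly f e hq,
    reducedDerivative_apply]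
  simp only [eval_finsetSum, eval_mul, eval_add, eval_smul, smul_eq_mul, eval_pow, eval_X, pow_mul,
    hx, ha]

theorem natDegree_reducedDerivative_le (f : R[X]) (e : ℕ) (a : R) (k : ℕ) {b : ℕ}
    {w : Fin J → R[X] × R[X]} (hw : ∀ j, (w j).1.natDegree ≤ b ∧ (w j).2.natDegree ≤ b) :
    (reducedDerivative f e a k w).natDegree ≤ b + k * f.natDegree + J := by
  rw [reducedDerivative_apply]
  refine natDegree_sum_le_of_forall_le _ _ fun j _ => natDegree_mul_le.trans ?_
  refine add_le_add (natDegree_add_le_of_degree_le ?_ ((natDegree_smul_le _ _).trans ?_))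
    ((natDegree_X_pow_le _).trans j.2.le) <;>
  refine (natDegree_twistedDerivative_le _ _ _ _).trans (Nat.add_le_add_right ?_ _)
  exacts [(hw j).1, (hw j).2]

theorem natDegree_stepanovPoly_le (f : R[X]) (e q : ℕ) {b : ℕ} {w : Fin (J + 1) → R[X] × R[X]}
    (hw : ∀ j, (w j).1.natDegree ≤ b ∧ (w j).2.natDegree ≤ b) :
    (stepanovPoly f e q w).natDegree ≤ b + e * f.natDegree + q * J := by
  refine natDegree_sum_le_of_forall_le _ _ fun j _ => natDegree_mul_le.trans ?_
  refine add_le_add (natDegree_add_le_of_degree_le ((hw j).1.trans (Nat.le_add_right _ _))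
    (natDegree_mul_le.trans ?_)) ((natDegree_X_pow_le _).trans (Nat.mul_le_mul_left q j.is_le))
  rw [add_comm b]
  exact add_le_add natDegree_pow_le (hw j).2

end AuxiliaryPolynomial

section Existence

open Polynomial Module

variable {F : Type*} [Field F]

theorem finrank_degreeLT (n : ℕ) : finrank F (degreeLT F n) = n := by
  rw [(degreeLTEquiv F n).finrank_eq, finrank_fin_fun]

theorem exists_ne_zero_forall_map_eq_zero {V : Type*} [AddCommGroup V] [Module F V] {M N : ℕ}
    (φ : Fin M → V →ₗ[F] F[X]) (hφ : ∀ i v, φ i v ∈ degreeLT F N) (hV : M * N < finrank F V) :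
    ∃ v ≠ 0, ∀ i, φ i v = 0 := by
  have : FiniteDimensional F V := finite_of_finrank_pos (Nat.zero_lt_of_lt hV)
  have : FiniteDimensional F (degreeLT F N) := .equiv (degreeLTEquiv F N).symm
  let Φ : V →ₗ[F] Fin M → degreeLT F N := LinearMap.pi fun i => (φ i).codRestrict _ (hφ i)
  have ker_ne_bot : LinearMap.ker Φ ≠ ⊥ := LinearMap.ker_ne_bot_of_finrank_lt <| by
    simpa [finrank_pi_fintype, finrank_degreeLT] using hV
  obtain ⟨v, hv, v_ne_zero⟩ := (Submodule.ne_bot_iff _).mp ker_ne_bot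
  exact ⟨v, v_ne_zero, fun i => congrArg Subtype.val (congrFun (LinearMap.mem_ker.mp hv) i)⟩

theorem mem_degreeLT_succ_iff_natDegree_le {u : F[X]} {n : ℕ} :
    u ∈ degreeLT F (n + 1) ↔ u.natDegree ≤ n := by
  rw [degreeLT_succ_eq_degreeLE, mem_degreeLE, natDegree_le_iff_degree_le]

theorem exists_reducedDerivative_eq_zero (f : F[X]) (e : ℕ) (a : F) {K b : ℕ}
    (hb : K * (2 * K * f.natDegree + K + 1) ≤ b) :
    ∃ w : Fin (K + 1) → F[X] × F[X], w ≠ 0 ∧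
      (∀ j, (w j).1.natDegree ≤ b ∧ (w j).2.natDegree ≤ b) ∧
      ∀ k < 2 * K, reducedDerivative f e a k w = 0 := by
  let V := degreeLT F (b + 1)
  have : FiniteDimensional F V := .equiv (degreeLTEquiv F (b + 1)).symm
  let inclusion : (Fin (K + 1) → V × V) →ₗ[F] Fin (K + 1) → F[X] × F[X] :=
    (V.subtype.prodMap V.subtype).compLeft _
  have inclusion_injective : Function.Injective inclusion :=
    (V.injective_subtype.prodMap V.injective_subtype).comp_left
  have natDegree_inclusion_le (w) (j) :
      (inclusion w j).1.natDegree ≤ b ∧ (inclusion w j).2.natDegree ≤ b :=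
    ⟨mem_degreeLT_succ_iff_natDegree_le.mp (w j).1.2,
      mem_degreeLT_succ_iff_natDegree_le.mp (w j).2.2⟩
  let N := b + 2 * K * f.natDegree + (K + 1)
  have reducedDerivative_mem (k : Fin (2 * K)) (w) :
      (reducedDerivative f e a k ∘ₗ inclusion) w ∈ degreeLT F (N + 1) := by
    refine mem_degreeLT_succ_iff_natDegree_le.mpr
      ((natDegree_reducedDerivative_le f e a k (natDegree_inclusion_le w)).trans ?_)
    exact Nat.add_le_add_right (Nat.add_le_add_left (Nat.mul_le_mul_right _ k.is_lt.le) _) _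
  have fewer_equations : 2 * K * (N + 1) < finrank F (Fin (K + 1) → V × V) := by
    have finrank_eq : finrank F (Fin (K + 1) → V × V) = (K + 1) * (2 * (b + 1)) := by
      simp [V, finrank_pi_fintype, finrank_degreeLT, two_mul]
    rw [finrank_eq]
    linear_combination 2 * hb
  obtain ⟨w, w_ne_zero, hw⟩ := exists_ne_zero_forall_map_eq_zero _ reducedDerivative_mem
    fewer_equations
  exact ⟨inclusion w, (map_ne_zero_iff inclusion inclusion_injective).mpr w_ne_zero,
    natDegree_inclusion_le w, fun k hk => hw ⟨k, hk⟩⟩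

end Existence

section Nonvanishing

open Polynomial

variable {F : Type*} [Field F]

theorem exists_eq_C_mul_sq_of_mul_sq_eq {f u v : F[X]} {c : F} (hu : u ≠ 0)
    (h : f * u ^ 2 = C c * v ^ 2) : ∃ g, f = C c * g ^ 2 := by
  obtain rfl | hc := eq_or_ne c 0
  · exact ⟨0, by simpa [hu] using h⟩
  have u_sq_dvd : u ^ 2 ∣ v ^ 2 :=
    (IsUnit.dvd_mul_left (isUnit_C.mpr hc.isUnit)).mp (h ▸ dvd_mul_left _ _)
  obtain ⟨g, rfl⟩ := (IsIntegrallyClosed.pow_dvd_pow_iff two_ne_zero).mp u_sq_dvd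
  refine ⟨g, mul_right_cancel₀ (pow_ne_zero 2 hu) ?_⟩
  rw [h]
  ring

variable [Fintype F] {f : F[X]} {e : ℕ}

local notation "q" => Fintype.card F

theorem X_pow_card_dvd_pow_card_sub_C : X ^ q ∣ f ^ q - C (f.coeff 0) := by
  have X_dvd : X ∣ f - C (f.coeff 0) := X_dvd_iff.mpr (by simp)
  have expand_X_dvd := map_dvd (expand F q) X_dvd
  rwa [expand_X, map_sub, expand_C, FiniteField.expand_card] at expand_X_dvd

/-- Multiplying `u + f ^ e * v` by `f * (u - f ^ e * v)` gives `f * u ^ 2 - f ^ q * v ^ 2`, which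
is congruent to `f * u ^ 2 - f(0) * v ^ 2` modulo `X ^ q`. By degrees the latter vanishes, which
would make `f` a constant times a square. -/
theorem eq_zero_of_X_pow_card_dvd_add_pow_mul (hq : q = 2 * e + 1) (hf₀ : f.coeff 0 ≠ 0)
    (hf : ∀ c g, f ≠ C c * g ^ 2) {u v : F[X]} (hu : f.natDegree + 2 * u.natDegree < q)
    (hv : 2 * v.natDegree < q) (h : X ^ q ∣ u + f ^ e * v) : u = 0 ∧ v = 0 := by
  have X_pow_dvd : X ^ q ∣ f * u ^ 2 - C (f.coeff 0) * v ^ 2 := by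
    have factorization : f * u ^ 2 - C (f.coeff 0) * v ^ 2 =
        (u + f ^ e * v) * (f * (u - f ^ e * v)) + (f ^ q - C (f.coeff 0)) * v ^ 2 := by
      rw [hq]
      ring
    rw [factorization]
    exact dvd_add (h.mul_right _) (X_pow_card_dvd_pow_card_sub_C.mul_right _)
  have natDegree_lt : (f * u ^ 2 - C (f.coeff 0) * v ^ 2).natDegree < q :=
    (natDegree_sub_le _ _).trans_lt <| max_lt
      ((natDegree_mul_le.trans (Nat.add_le_add_left natDegree_pow_le _)).trans_lt hu)
      (((natDegree_C_mul_le _ _).trans natDegree_pow_le).trans_lt hv)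
  have mul_sq_eq : f * u ^ 2 = C (f.coeff 0) * v ^ 2 := sub_eq_zero.mp <|
    eq_zero_of_dvd_of_natDegree_lt X_pow_dvd (by rwa [natDegree_X_pow])
  have u_eq_zero : u = 0 := by
    by_contra u_ne_zero
    obtain ⟨g, hg⟩ := exists_eq_C_mul_sq_of_mul_sq_eq u_ne_zero mul_sq_eq
    exact hf _ g hg
  exact ⟨u_eq_zero, by simpa [u_eq_zero, hf₀] using mul_sq_eq.symm⟩

theorem stepanovPoly_ne_zero (hq : q = 2 * e + 1) (hf₀ : f.coeff 0 ≠ 0)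
    (hf : ∀ c g, f ≠ C c * g ^ 2) {b : ℕ} (hb : f.natDegree + 2 * b < q) {J : ℕ}
    {w : Fin J → F[X] × F[X]} (hw : ∀ j, (w j).1.natDegree ≤ b ∧ (w j).2.natDegree ≤ b)
    (hw₀ : w ≠ 0) : stepanovPoly f e q w ≠ 0 := by
  contrapose! hw₀ with h
  induction J with
  | zero => exact Subsingleton.elim _ _
  | succ J ih =>
    have stepanovPoly_eq : stepanovPoly f e q w =
        ((w 0).1 + f ^ e * (w 0).2) + X ^ q * stepanovPoly f e q (Fin.tail w) := by
      simp only [stepanovPoly, Fin.sum_univ_succ, Finset.mul_sum, Fin.tail, Fin.val_zero,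
        Fin.val_succ, mul_zero, pow_zero, mul_one]
      congr! 2
      ring
    rw [stepanovPoly_eq] at h
    have head_eq_zero : w 0 = 0 := by
      have X_pow_dvd : X ^ q ∣ (w 0).1 + f ^ e * (w 0).2 :=
        eq_neg_of_add_eq_zero_left h ▸ (dvd_mul_right _ _).neg_right
      have := hw 0
      exact Prod.ext_iff.mpr <| eq_zero_of_X_pow_card_dvd_add_pow_mul hq hf₀ hf (by omega)
        (by omega) X_pow_dvd
    have tail_eq_zero : Fin.tail w = 0 := by
      refine ih (fun j => hw j.succ) ?_
      simpa [head_eq_zero] using h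
    exact funext (Fin.cases head_eq_zero (congrFun tail_eq_zero))

end Nonvanishing

section RootCounting

open Polynomial

variable {R : Type*} [CommRing R] [IsDomain R]

theorem le_rootMultiplicity_of_isRoot_iterate_derivative (p : ℕ) [CharP R p] {h : R[X]}
    (hh : h ≠ 0) {x : R} {m : ℕ} (hm : m ≤ p) (hroot : ∀ k < m, (derivative^[k] h).IsRoot x) :
    m ≤ h.rootMultiplicity x := by
  cases m with
  | zero => exact Nat.zero_le _
  | succ m =>
    refine lt_rootMultiplicity_of_isRoot_iterate_derivative_of_mem_nonZeroDivisors' hh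
      (fun k hk => hroot k (Nat.lt_succ_of_le hk)) fun k hk hk₀ => mem_nonZeroDivisors_of_ne_zero ?_
    rw [Ne, CharP.cast_eq_zero_iff R p]
    exact fun p_dvd => absurd (Nat.le_of_dvd (Nat.pos_of_ne_zero hk₀) p_dvd) (by omega)

theorem mul_card_le_natDegree_of_le_rootMultiplicity {h : R[X]} {s : Finset R} {m : ℕ}
    (hs : ∀ x ∈ s, m ≤ h.rootMultiplicity x) : m * s.card ≤ h.natDegree := by
  classical
  have nsmul_le_roots : m • s.val ≤ h.roots := Multiset.le_iff_count.mpr fun x => by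
    by_cases hx : x ∈ s
    · simpa [Multiset.count_eq_one_of_mem s.nodup hx] using hs x hx
    · simp [Multiset.count_eq_zero_of_notMem hx]
  calc m * s.card = Multiset.card (m • s.val) := by simp
    _ ≤ h.natDegree := (Multiset.card_le_card nsmul_le_roots).trans h.card_roots'

end RootCounting

section CharacterSum

open Polynomial Finset

theorem ne_C_mul_sq_of_squarefree {F : Type*} [Field F] {f : F[X]} (hf : Squarefree f)
    (hd : f.natDegree ≠ 0) (c : F) (g : F[X]) : f ≠ C c * g ^ 2 := by
  rintro rfl
  have g_unit : IsUnit g := hf g (by rw [← sq]; exact dvd_mul_left _ _)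
  obtain ⟨a, -, rfl⟩ := isUnit_iff.mp g_unit
  rw [← C_pow, ← C_mul, natDegree_C] at hd
  exact hd rfl

variable {F : Type*} [Field F] [Fintype F] [DecidableEq F] {f : F[X]}

local notation "q" => Fintype.card F

theorem two_mul_mul_card_eval_pow_eq_le (p : ℕ) [CharP F p] {e K b : ℕ} (hq : q = 2 * e + 1)
    (he : e ≠ 0) (hf₀ : f.coeff 0 ≠ 0) (hf : ∀ c g, f ≠ C c * g ^ 2) (hKp : 2 * K ≤ p)
    (hKb : K * (2 * K * f.natDegree + K + 1) ≤ b) (hb : f.natDegree + 2 * b < q) {a : F}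
    (ha : a ≠ 0) : 2 * K * #{x | f.eval x ^ e = a} ≤ b + e * f.natDegree + q * K := by
  obtain ⟨w, w_ne_zero, natDegree_w_le, hw⟩ := exists_reducedDerivative_eq_zero f e a hKb
  refine (mul_card_le_natDegree_of_le_rootMultiplicity fun x hx => ?_).trans
    (natDegree_stepanovPoly_le f e q natDegree_w_le)
  replace hx : f.eval x ^ e = a := by simpa using hx
  have eval_ne_zero : f.eval x ≠ 0 := by
    rintro eval_eq_zero
    exact ha (by rw [← hx, eval_eq_zero, zero_pow he])
  refine le_rootMultiplicity_of_isRoot_iterate_derivative p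
    (stepanovPoly_ne_zero hq hf₀ hf hb natDegree_w_le w_ne_zero) hKp fun k hk => ?_
  have eval_eq := eval_reducedDerivative f (Nat.cast_card_eq_zero F) (FiniteField.pow_card x) hx k w
  rw [hw k hk, eval_zero, eq_comm] at eval_eq
  exact (mul_eq_zero.mp eval_eq).resolve_left (pow_ne_zero k eval_ne_zero)

theorem sign_mul_sum_quadraticChar {ι : Type*} [Fintype ι] (g : ι → F) {s : ℤ}
    (hs : s = 1 ∨ s = -1) :
    s * ∑ i, quadraticChar F (g i) =
      2 * #{i | quadraticChar F (g i) = s} + #{i | g i = 0} - Fintype.card ι := by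
  have pointwise (i) : s * quadraticChar F (g i) =
      2 * (if quadraticChar F (g i) = s then 1 else 0) + (if g i = 0 then 1 else 0) - 1 := by
    by_cases hi : g i = 0
    · rcases hs with rfl | rfl <;> simp [hi]
    · rcases hs with rfl | rfl <;> rcases quadraticChar_dichotomy hi with h | h <;> simp [hi, h]
  rw [mul_sum, sum_congr rfl fun i _ => pointwise i]
  simp only [sum_add_distrib, sum_sub_distrib, ← mul_sum, sum_boole, sum_const, card_univ,
    nsmul_eq_mul, mul_one]

theorem card_filter_eval_eq_zero_le (hf : f ≠ 0) : #{x | f.eval x = 0} ≤ f.natDegree := by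
  refine (card_le_card fun x hx => ?_).trans ((Multiset.toFinset_card_le _).trans f.card_roots')
  simpa [hf] using hx

theorem two_mul_mul_abs_sum_quadraticChar_eval_le_of_coeff_zero_ne_zero (p : ℕ) [CharP F p]
    (hp : p ≠ 2) {K : ℕ} (hf₀ : f.coeff 0 ≠ 0) (hf : ∀ c g, f ≠ C c * g ^ 2) (hKp : 2 * K ≤ p)
    (hKq : f.natDegree + 2 * (K * (2 * K * f.natDegree + K + 1)) < q) :
    2 * K * |∑ x, quadraticChar F (f.eval x)| ≤ (f.natDegree + 1) * q + 2 * K * f.natDegree := by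
  have ringChar_ne_two : ringChar F ≠ 2 := by rwa [ringChar.eq F p]
  obtain ⟨e, hq⟩ : Odd q := Nat.odd_iff.mpr (FiniteField.odd_card_of_char_ne_two ringChar_ne_two)
  have he : e ≠ 0 := by
    have := Fintype.one_lt_card (α := F)
    omega
  obtain ⟨s, hs, abs_eq⟩ : ∃ s : ℤ, (s = 1 ∨ s = -1) ∧
      |∑ x, quadraticChar F (f.eval x)| = s * ∑ x, quadraticChar F (f.eval x) := by
    rcases abs_choice (∑ x, quadraticChar F (f.eval x)) with h | h
    exacts [⟨1, .inl rfl, by simpa using h⟩, ⟨-1, .inr rfl, by simpa using h⟩]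
  have card_eq_sign_le : #{x | quadraticChar F (f.eval x) = s} ≤ #{x | f.eval x ^ e = (s : F)} :=
    card_le_card <| monotone_filter_right _ fun x _ hx => by
      rw [← hx, quadraticChar_eq_pow_of_char_ne_two' ringChar_ne_two]
      congr
      omega
  have stepanov := two_mul_mul_card_eval_pow_eq_le p hq he hf₀ hf hKp le_rfl hKq (a := (s : F))
    (by rcases hs with rfl | rfl <;> simp)
  have card_zeros_le := card_filter_eval_eq_zero_le (f := f) (by rintro rfl; simp at hf₀)
  rw [abs_eq, sign_mul_sum_quadraticChar _ hs]
  have mul_card_eq_sign_le := Nat.mul_le_mul_left K card_eq_sign_le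
  have mul_card_zeros_le := Nat.mul_le_mul_left K card_zeros_le
  zify at hq hKq stepanov mul_card_eq_sign_le mul_card_zeros_le
  rw [hq] at hKq stepanov ⊢
  linarith

theorem two_mul_mul_abs_sum_quadraticChar_eval_le (p : ℕ) [CharP F p]
    (hp : p ≠ 2) {K : ℕ} (hf : ∀ c g, f ≠ C c * g ^ 2) (hKp : 2 * K ≤ p)
    (hKq : f.natDegree + 2 * (K * (2 * K * f.natDegree + K + 1)) < q) :
    2 * K * |∑ x, quadraticChar F (f.eval x)| ≤ (f.natDegree + 1) * q + 2 * K * f.natDegree := by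
  have f_ne_zero : f ≠ 0 := by simpa using hf 0 0
  obtain ⟨r, hr⟩ : ∃ r, f.eval r ≠ 0 := exists_eval_ne_zero_of_natDegree_lt_card f f_ne_zero
    (by rw [Cardinal.mk_fintype]; exact_mod_cast (Nat.le_add_right _ _).trans_lt hKq)
  have taylor_ne (c g) : taylor r f ≠ C c * g ^ 2 := fun h => hf c (taylor (-r) g) <| by
    rw [← taylor_C (-r) c, ← taylor_pow, ← taylor_mul, ← h, taylor_taylor, neg_add_cancel,
      taylor_zero]
  have sum_taylor : ∑ x, quadraticChar F ((taylor r f).eval x) =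
      ∑ x, quadraticChar F (f.eval x) := by
    simp only [taylor_eval]
    exact Equiv.sum_comp (Equiv.addRight r) fun x => quadraticChar F (f.eval x)
  have bound := two_mul_mul_abs_sum_quadraticChar_eval_le_of_coeff_zero_ne_zero p hp (K := K)
    (f := taylor r f) (by rwa [taylor_coeff_zero]) taylor_ne hKp (by rwa [natDegree_taylor])
  rwa [sum_taylor, natDegree_taylor] at bound

theorem two_mul_mul_abs_sum_prod_quadraticChar_le {ι : Type*} (p : ℕ) [CharP F p] (hp : p ≠ 2)
    {K : ℕ} {S : Finset ι} (hS : S.Nonempty) {t : ι → F} (ht : Set.InjOn t S) (hKp : 2 * K ≤ p)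
    (hKq : #S + 2 * (K * (2 * K * #S + K + 1)) < q) :
    2 * K * |∑ x, ∏ i ∈ S, quadraticChar F (x + t i)| ≤ (#S + 1) * q + 2 * K * #S := by
  let f : F[X] := ∏ i ∈ S, (X - C (-t i))
  have natDegree_f : f.natDegree = #S := natDegree_finsetProd_X_sub_C_eq_card S _
  have squarefree_f : Squarefree f := Separable.squarefree <|
    separable_prod_X_sub_C_iff'.mpr fun i hi j hj h => ht hi hj (neg_injective h)
  have eval_f (x) : ∏ i ∈ S, quadraticChar F (x + t i) = quadraticChar F (f.eval x) := by
    simp [f, eval_prod]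
  simp only [eval_f]
  rw [← natDegree_f] at hKq ⊢
  exact two_mul_mul_abs_sum_quadraticChar_eval_le p hp
    (ne_C_mul_sq_of_squarefree squarefree_f (by rw [natDegree_f]; exact hS.card_ne_zero)) hKp hKq

end CharacterSum

section LegendreCorrelation

open Finset Filter Topology NumberTheorySymbols

/-- The primes tending to infinity. -/
abbrev atPrimes : Filter ℕ :=
  atTop ⊓ 𝓟 {p | p.Prime}

/-- The sum of `∏ w ∈ S, χ_p (n + w)` over a period `0 ≤ n < p`. The Jacobi symbol stands in for
the Legendre symbol so that the sum makes sense for all `p`. -/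
def legendreCorrelation (S : Finset ℕ) (p : ℕ) : ℤ :=
  ∑ n ∈ range p, ∏ w ∈ S, J(((n + w : ℕ) : ℤ) | p)

theorem sum_range_natCast_zmod {M : Type*} [AddCommMonoid M] (p : ℕ) [NeZero p] (f : ZMod p → M) :
    ∑ n ∈ range p, f n = ∑ x, f x :=
  sum_nbij' (fun n => (n : ZMod p)) ZMod.val (fun _ _ => mem_univ _)
    (fun x _ => mem_range.mpr x.val_lt) (fun _ hn => ZMod.val_cast_of_lt (mem_range.mp hn))
    (fun x _ => ZMod.natCast_zmod_val x) fun _ _ => rfl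

theorem legendreCorrelation_eq_sum_zmod (S : Finset ℕ) (p : ℕ) [Fact p.Prime] :
    legendreCorrelation S p = ∑ x : ZMod p, ∏ w ∈ S, quadraticChar (ZMod p) (x + (w : ZMod p)) := by
  rw [← sum_range_natCast_zmod, legendreCorrelation]
  refine sum_congr rfl fun n _ => prod_congr rfl fun w _ => ?_
  rw [← jacobiSym.legendreSym.to_jacobiSym, legendreSym]
  push_cast
  rfl

theorem legendreCorrelation_empty (p : ℕ) : legendreCorrelation ∅ p = p := by
  simp [legendreCorrelation]

theorem two_mul_mul_abs_legendreCorrelation_le {S : Finset ℕ} (hS : S.Nonempty) {p K : ℕ}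
    (hp : p.Prime) (hp₂ : p ≠ 2) (hSp : ∀ w ∈ S, w < p) (hKp : 2 * K ≤ p)
    (hKp' : #S + 2 * (K * (2 * K * #S + K + 1)) < p) :
    2 * K * |legendreCorrelation S p| ≤ (#S + 1) * p + 2 * K * #S := by
  have : Fact p.Prime := ⟨hp⟩
  have natCast_injOn : Set.InjOn (fun w : ℕ => (w : ZMod p)) S := fun v hv w hw h => by
    simpa [ZMod.natCast_eq_natCast_iff', Nat.mod_eq_of_lt, hSp v hv, hSp w hw] using h
  rw [legendreCorrelation_eq_sum_zmod]
  simpa only [ZMod.card] using two_mul_mul_abs_sum_prod_quadraticChar_le p hp₂ hS natCast_injOn hKp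
    (by rwa [ZMod.card])

theorem legendreCorrelation_isLittleO {S : Finset ℕ} (hS : S.Nonempty) :
    (fun p => (legendreCorrelation S p : ℝ)) =o[atPrimes] fun p => (p : ℝ) := by
  refine Asymptotics.isLittleO_iff.mpr fun c hc => eventually_inf_principal.mpr ?_
  obtain ⟨K, hK⟩ := exists_nat_gt ((#S + 1) / c)
  have K_pos : (0 : ℝ) < K := lt_of_le_of_lt (by positivity) hK
  rw [div_lt_iff₀ hc] at hK
  filter_upwards [eventually_gt_atTop 2, eventually_gt_atTop (S.sup id),
    eventually_ge_atTop (2 * K), eventually_gt_atTop (#S + 2 * (K * (2 * K * #S + K + 1))),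
    tendsto_natCast_atTop_atTop.eventually_ge_atTop (2 * #S / c)]
    with p hp₂ hSp hKp hKp' two_card_le hp
  rw [div_le_iff₀ hc] at two_card_le
  have bound := two_mul_mul_abs_legendreCorrelation_le hS hp hp₂.ne'
    (fun w hw => (le_sup (f := id) hw).trans_lt hSp) hKp hKp'
  rify at bound
  rw [Real.norm_eq_abs, Real.norm_natCast]
  refine le_of_mul_le_mul_left ?_ (mul_pos two_pos K_pos)
  calc 2 * K * |(legendreCorrelation S p : ℝ)| ≤ (#S + 1) * p + K * (2 * #S) := by linarith
    _ ≤ K * c * p + K * (p * c) := by gcongr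
    _ = 2 * K * (c * p) := by ring

end LegendreCorrelation

section TwistedProduct

open Finset

variable {ι : Type*} {W : Finset ι} {ε x : ι → ℤ}

theorem prod_one_add_mul_eq_ite (hε : ∀ w ∈ W, ε w = 1 ∨ ε w = -1)
    (hx : ∀ w ∈ W, x w = 1 ∨ x w = -1) :
    ∏ w ∈ W, (1 + ε w * x w) = if ∀ w ∈ W, x w = ε w then 2 ^ #W else 0 := by
  split_ifs with h
  · refine prod_eq_pow_card fun w hw => ?_
    rcases hε w hw with hεw | hεw <;> simp [h w hw, hεw]
  · push Not at h
    obtain ⟨w, hw, x_ne⟩ := h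
    refine prod_eq_zero hw ?_
    rcases hε w hw with hεw | hεw <;> rcases hx w hw with hxw | hxw <;> simp_all

theorem abs_prod_one_add_mul_le (hε : ∀ w ∈ W, |ε w| ≤ 1) (hx : ∀ w ∈ W, |x w| ≤ 1) :
    |∏ w ∈ W, (1 + ε w * x w)| ≤ 2 ^ #W := by
  rw [abs_prod, ← prod_const]
  refine prod_le_prod (fun _ _ => abs_nonneg _) fun w hw => ?_
  calc |1 + ε w * x w| ≤ |1| + |ε w * x w| := abs_add_le _ _
    _ = 1 + |ε w| * |x w| := by rw [abs_one, abs_mul]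
    _ ≤ 1 + 1 := by gcongr; exact mul_le_one₀ (hε w hw) (abs_nonneg _) (hx w hw)

end TwistedProduct

section ResiduePattern

open Asymptotics Finset Filter Topology NumberTheorySymbols

/-- The `n` with `1 ≤ n` and `n + m ≤ p - 1` at which `χ_p(n + w) = ε w` for all `w ∈ W`; it is
empty unless `p` is prime. -/
def residuePattern (W : Finset ℕ) (ε : ℕ → ℤ) (m p : ℕ) : Set ℕ :=
  {n | 1 ≤ n ∧ n + m ≤ p - 1 ∧
    ∃ _ : Fact p.Prime, ∀ w ∈ W, legendreSym p ((n + w : ℕ) : ℤ) = ε w}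

/-- The sum of `∏ w ∈ W, (1 + ε w * χ_p (n + w))` over a period `0 ≤ n < p`. If `ε` takes the
values `±1`, the product is `2 ^ #W` where `χ_p (n + w) = ε w` for all `w ∈ W`, and `0` at any
other `n` for which no `n + w` is divisible by `p`. -/
def patternSum (W : Finset ℕ) (ε : ℕ → ℤ) (p : ℕ) : ℤ :=
  ∑ n ∈ range p, ∏ w ∈ W, (1 + ε w * J(((n + w : ℕ) : ℤ) | p))

theorem patternSum_eq_sum_powerset (W : Finset ℕ) (ε : ℕ → ℤ) (p : ℕ) :
    patternSum W ε p = ∑ S ∈ W.powerset, (∏ w ∈ S, ε w) * legendreCorrelation S p := by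
  simp only [patternSum, legendreCorrelation, prod_one_add, prod_mul_distrib, mul_sum]
  exact sum_comm

theorem patternSum_sub_isLittleO (W : Finset ℕ) (ε : ℕ → ℤ) :
    (fun p => (patternSum W ε p - p : ℝ)) =o[atPrimes] fun p => (p : ℝ) := by
  have patternSum_sub_eq (p : ℕ) : (patternSum W ε p - p : ℝ) =
      ∑ S ∈ W.powerset.erase ∅, ((∏ w ∈ S, ε w : ℤ) : ℝ) * legendreCorrelation S p := by
    rw [patternSum_eq_sum_powerset, ← add_sum_erase _ _ (empty_mem_powerset W),
      legendreCorrelation_empty]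
    push_cast
    simp
  simp only [patternSum_sub_eq]
  exact .fun_sum fun S hS => (legendreCorrelation_isLittleO
    (nonempty_iff_ne_empty.mpr (ne_of_mem_erase hS))).const_mul_left _

theorem abs_jacobiSym_le_one (a : ℤ) (b : ℕ) : |J(a | b)| ≤ 1 := by
  rcases jacobiSym.trichotomy a b with h | h | h <;> simp [h]

theorem legendreSym_natCast_eq_one_or_neg_one {p n : ℕ} [Fact p.Prime] (hn : n ≠ 0)
    (hnp : n < p) : legendreSym p n = 1 ∨ legendreSym p n = -1 := by
  refine legendreSym.eq_one_or_neg_one p ?_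
  rw [Int.cast_natCast, Ne, ZMod.natCast_eq_zero_iff]
  exact Nat.not_dvd_of_pos_of_lt (Nat.pos_of_ne_zero hn) hnp

variable {W : Finset ℕ} {ε : ℕ → ℤ} {m p : ℕ}

theorem two_pow_mul_ncard_residuePattern (hε : ∀ w ∈ W, ε w = 1 ∨ ε w = -1)
    (hW : ∀ w ∈ W, w ≤ m) (hp : p.Prime) :
    2 ^ #W * ((residuePattern W ε m p).ncard : ℤ) =
      ∑ n ∈ Icc 1 (p - 1 - m), ∏ w ∈ W, (1 + ε w * J(((n + w : ℕ) : ℤ) | p)) := by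
  have : Fact p.Prime := ⟨hp⟩
  have residuePattern_eq : residuePattern W ε m p =
      {n ∈ Icc 1 (p - 1 - m) | ∀ w ∈ W, J(((n + w : ℕ) : ℤ) | p) = ε w} := by
    ext n
    simp only [residuePattern, exists_prop, this, true_and, jacobiSym.legendreSym.to_jacobiSym,
      coe_filter, mem_Icc, Set.mem_ofPred_eq, ← and_assoc]
    refine and_congr_left fun _ => ?_
    omega
  rw [residuePattern_eq, Set.ncard_coe_finset, card_filter, Nat.cast_sum, mul_sum]
  refine sum_congr rfl fun n hn => ?_
  rw [prod_one_add_mul_eq_ite hε fun w hw => ?_]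
  · simp
  · rw [← jacobiSym.legendreSym.to_jacobiSym]
    have := hW w hw
    rw [mem_Icc] at hn
    exact legendreSym_natCast_eq_one_or_neg_one (by omega) (by omega)

theorem abs_patternSum_sub_le (hε : ∀ w ∈ W, ε w = 1 ∨ ε w = -1) (hW : ∀ w ∈ W, w ≤ m)
    (hp : p.Prime) :
    |patternSum W ε p - 2 ^ #W * ((residuePattern W ε m p).ncard : ℤ)| ≤ (m + 1) * 2 ^ #W := by
  have Icc_subset : Icc 1 (p - 1 - m) ⊆ range p := fun n hn => by
    rw [mem_Icc] at hn
    exact mem_range.mpr (by omega)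
  have card_sdiff_le : #(range p \ Icc 1 (p - 1 - m)) ≤ m + 1 := by
    rw [card_sdiff_of_subset Icc_subset, card_range, Nat.card_Icc]
    omega
  have abs_summand_le (n : ℕ) : |∏ w ∈ W, (1 + ε w * J(((n + w : ℕ) : ℤ) | p))| ≤ 2 ^ #W :=
    abs_prod_one_add_mul_le (fun w hw => by rcases hε w hw with h | h <;> simp [h])
      fun w _ => abs_jacobiSym_le_one _ _
  rw [two_pow_mul_ncard_residuePattern hε hW hp, patternSum, ← sum_sdiff Icc_subset,
    add_sub_cancel_right]
  calc _ ≤ ∑ n ∈ range p \ Icc 1 (p - 1 - m), |_| := abs_sum_le_sum_abs _ _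
    _ ≤ #(range p \ Icc 1 (p - 1 - m)) • 2 ^ #W :=
      sum_le_card_nsmul _ _ _ fun n _ => abs_summand_le n
    _ ≤ (m + 1) * 2 ^ #W := by
      rw [nsmul_eq_mul]
      gcongr
      exact_mod_cast card_sdiff_le

theorem tendsto_ncard_residuePattern_div (hε : ∀ w ∈ W, ε w = 1 ∨ ε w = -1)
    (hW : ∀ w ∈ W, w ≤ m) :
    Tendsto (fun p : ℕ => ((residuePattern W ε m p).ncard : ℝ) / p) atPrimes
      (𝓝 (2 ^ (-(#W : ℤ)))) := by
  have patternSum_sub_isBigO : (fun p => (patternSum W ε p - 2 ^ #W *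
      (residuePattern W ε m p).ncard : ℝ)) =O[atPrimes] fun _ => (1 : ℝ) :=
    .of_bound ((m + 1) * 2 ^ #W) <| eventually_inf_principal.mpr <| .of_forall fun p hp => by
      simpa using mod_cast abs_patternSum_sub_le hε hW hp
  have one_isLittleO : (fun _ => (1 : ℝ)) =o[atPrimes] fun p : ℕ => (p : ℝ) :=
    ((isLittleO_const_id_atTop (1 : ℝ)).comp_tendsto tendsto_natCast_atTop_atTop).mono
      inf_le_left
  have sub_isLittleO : (fun p => (2 ^ #W * (residuePattern W ε m p).ncard - p : ℝ)) =o[atPrimes]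
      fun p => (p : ℝ) :=
    ((patternSum_sub_isLittleO W ε).sub
      (patternSum_sub_isBigO.trans_isLittleO one_isLittleO)).congr_left fun p => by ring
  have tendsto_mul := (sub_isLittleO.tendsto_div_nhds_zero.add_const 1).mul_const
    ((2 : ℝ) ^ (-(#W : ℤ)))
  rw [zero_add, one_mul] at tendsto_mul
  refine tendsto_mul.congr' <| eventually_inf_principal.mpr <| .of_forall fun p hp => ?_
  have p_ne_zero : (p : ℝ) ≠ 0 := mod_cast hp.ne_zero
  rw [zpow_neg, zpow_natCast]
  field_simp
  ring

/-- The `n` with `1 ≤ n` and `n + b ≤ p - 1` such that the quadratic residues of `p` in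
`[n + a, n + b]` are exactly the elements of `n + W` in that interval; it is empty unless `p` is
prime. -/
def residueSupport (W : Finset ℕ) (a b p : ℕ) : Set ℕ :=
  {n | 1 ≤ n ∧ n + b ≤ p - 1 ∧ ∃ _ : Fact p.Prime, ∀ m : ℕ, n + a ≤ m → m ≤ n + b →
    (legendreSym p (m : ℤ) = 1 ↔ ∃ w ∈ W, m = n + w)}

theorem residueSupport_eq_residuePattern (W : Finset ℕ) (a b p : ℕ) :
    residueSupport W a b p = residuePattern (Icc a b) (fun w => if w ∈ W then 1 else -1) b p := by
  ext n
  refine and_congr_right fun hn => and_congr_right fun hnb => exists_congr fun hp => ?_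
  have eq_ite_iff (w : ℕ) (hw : w ≤ b) :
      legendreSym p ((n + w : ℕ) : ℤ) = (if w ∈ W then 1 else -1) ↔
        (legendreSym p ((n + w : ℕ) : ℤ) = 1 ↔ ∃ v ∈ W, n + w = n + v) := by
    have exists_iff : (∃ v ∈ W, n + w = n + v) ↔ w ∈ W := by simp
    have dichotomy := legendreSym_natCast_eq_one_or_neg_one (p := p) (n := n + w)
      (by omega) (by omega)
    rw [exists_iff]
    split_ifs with hwW <;> rcases dichotomy with h | h <;> rw [h] <;> simp [hwW]
  constructor
  · intro h w hw
    obtain ⟨haw, hwb⟩ := mem_Icc.mp hw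
    exact (eq_ite_iff w hwb).mpr (h (n + w) (by omega) (by omega))
  · intro h k hak hkb
    obtain ⟨w, rfl⟩ := Nat.exists_eq_add_of_le ((Nat.le_add_right n a).trans hak)
    exact (eq_ite_iff w (by omega)).mp (h w (mem_Icc.mpr (by omega)))

theorem tendsto_ncard_residueSupport_div (W : Finset ℕ) {a b : ℕ} (hab : a ≤ b) :
    Tendsto (fun p : ℕ => ((residueSupport W a b p).ncard : ℝ) / p) atPrimes
      (𝓝 (2 ^ (-(1 + (b : ℤ) - a)))) := by
  have card_eq : (#(Icc a b) : ℤ) = 1 + b - a := by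
    rw [Nat.card_Icc]
    omega
  simp only [residueSupport_eq_residuePattern]
  rw [← card_eq]
  exact tendsto_ncard_residuePattern_div (fun w _ => by split_ifs <;> simp)
    fun w hw => (mem_Icc.mp hw).2

end ResiduePattern

/-- Proposition 9.3: let `W` be a nonempty finite set of nonnegative integers and `ε` a choice
of signs on `W`. Let `c_ε(p)` count the `n ≥ 1` with `n + max W ≤ p - 1` such that
`χ_p(n + w) = ε(w)` for all `w ∈ W`, and let `c_σ(p)` count the `n ≥ 1` with
`n + max W ≤ p - 1` such that the shifted set `n + W` is exactly the set of quadratic residues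
of `p` in `[n + min W, n + max W]`. Then, as `p → ∞` through the primes,
`c_ε(p)/p → 2^{-|W|}` and `c_σ(p)/p → 2^{-(1 + max W - min W)}`. -/
theorem residue_pattern_and_support_density (W : Finset ℕ) (hW : W.Nonempty)
    (ε : ℕ → ℤ) (hε : ∀ w ∈ W, ε w = 1 ∨ ε w = -1) :
    Filter.Tendsto (fun p : ℕ =>
        ({n : ℕ | 1 ≤ n ∧ n + W.max' hW ≤ p - 1 ∧
            ∃ hp : Fact p.Prime, ∀ w ∈ W,
              @legendreSym p hp ((n + w : ℕ) : ℤ) = ε w}.ncard : ℝ) / (p : ℝ))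
      (Filter.atTop ⊓ Filter.principal {p : ℕ | p.Prime})
      (nhds ((2 : ℝ) ^ (-(W.card : ℤ)))) ∧
    Filter.Tendsto (fun p : ℕ =>
        ({n : ℕ | 1 ≤ n ∧ n + W.max' hW ≤ p - 1 ∧
            ∃ hp : Fact p.Prime, ∀ m : ℕ, n + W.min' hW ≤ m → m ≤ n + W.max' hW →
              (@legendreSym p hp (m : ℤ) = 1 ↔ ∃ w ∈ W, m = n + w)}.ncard : ℝ) / (p : ℝ))
      (Filter.atTop ⊓ Filter.principal {p : ℕ | p.Prime})
      (nhds ((2 : ℝ) ^ (-(1 + (W.max' hW : ℤ) - (W.min' hW : ℤ))))) :=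
  ⟨tendsto_ncard_residuePattern_div hε W.le_max',
    tendsto_ncard_residueSupport_div W (W.min'_le_max' hW)⟩
end
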